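/- arXiv:1403.6385 — 3 statements merged into one kernel-verified Lean document; each statement's English description precedes it below -/
import Mathlib

section
/- Let I ⊆ ℝ be a non-empty open interval, T, L ∈ [0,∞), n ∈ ℕ₀, and let θ = (t₀,…,t_n) ∈ [0,T]^{n+1} satisfy 0 = t₀ < t₁ < … < t_n = T and L|θ| < 1, where |θ| := max_{k∈{1,…,n}} (t_k − t_{k−1}). Let μ : cl(I) → ℝ be Borel measurable and satisfy (x−y)(μ(x)−μ(y)) ≤ L(x−y)² for all x, y ∈ I. Let (Ω, 𝓕, ℙ, (𝓕_t)_{t∈[0,T]}) be a filtered probability space whose filtration satisfies the usual conditions, let W : [0,T]×Ω → ℝ be a standard (𝓕_t)-Brownian motion, let X : [0,T]×Ω → cl(I) be an (𝓕_t)-adapted stochastic process with continuous sample paths such that ℙ-a.s. ∫_0^T |μ(X_s)| ds < ∞ and for every t ∈ [0,T] it holds ℙ-a.s. that X_t = X_0 + ∫_0^t μ(X_s) ds + W_t, and let Y : {t₀,…,t_n}×Ω → I be measurable with Y_{t_{k+1}} = Y_{t_k} + μ(Y_{t_{k+1}})(t_{k+1}−t_k) + (W_{t_{k+1}} − W_{t_k})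 ℙ-a.s. for all k ∈ {0,…,n−1}. Assume sup_{i∈{0,…,n}} ℙ[X_{t_i} ∈ ∂I] = 0. For i ∈ {1,…,n} set D_i := (μ(X_{t_i}) − μ(Y_{t_i}))/(X_{t_i} − Y_{t_i}) with the convention 0/0 := 0. Then ℙ-a.s., for all k ∈ {0,…,n}: (i) (X_{t_k} − Y_{t_k})·∏_{i=0}^{k−1}(1 − (t_{i+1}−t_i)·D_{i+1}) = X_0 − Y_0 + ∫_0^{t_k} (μ(X_s) − μ(X_{⌈s⌉_θ})) · ∏_{i∈{0,…,n−1}: t_{i+1} ≤ ⌊s⌋_θ} (1 − (t_{i+1}−t_i)·D_{i+1}) ds; and (ii) |X_{t_k} − Y_{t_k}| ≤ (1/(1−|θ|L))^k · ( |X_0 − Y_0| + ∫_0^{t_k} |μ(X_s) − μ(X_{⌈s⌉_θ})| ds ). -/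
open MeasureTheory ProbabilityTheory Filter Set
open scoped ENNReal NNReal

noncomputable section

/-- The largest grid point of the grid `t 0 < t 1 < ... < t n` which is `≤ s`. -/
def gridFloor (n : ℕ) (t : ℕ → ℝ) (s : ℝ) : ℝ :=
  sSup {x | (∃ i ≤ n, x = t i) ∧ x ≤ s}

/-- The smallest grid point of the grid `t 0 < t 1 < ... < t n` which is `≥ s`. -/
def gridCeil (n : ℕ) (t : ℕ → ℝ) (s : ℝ) : ℝ :=
  sInf {x | (∃ i ≤ n, x = t i) ∧ s ≤ x}

/-- The mesh size `|θ| = max_k (t_k - t_{k-1})` of the grid `t 0 < t 1 < ... < t n`. -/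
def gridMesh (n : ℕ) (t : ℕ → ℝ) : ℝ := ⨆ i : Fin n, (t (i.1 + 1) - t i.1)


theorem grid_strictMono {n : ℕ} {t : ℕ → ℝ} (htmono : ∀ i < n, t i < t (i + 1)) :
    ∀ j ≤ n, ∀ i < j, t i < t j := by
  intro j
  induction j with
  | zero => intro _ i hi; omega
  | succ j ih =>
    intro hj i hi
    have h1 := htmono j (by omega)
    rcases Nat.lt_succ_iff_lt_or_eq.mp hi with h | h
    · exact (ih (by omega) i h).trans h1
    · rw [h]; exact h1

theorem grid_mono {n : ℕ} {t : ℕ → ℝ} (htmono : ∀ i < n, t i < t (i + 1)) :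
    ∀ j ≤ n, ∀ i ≤ j, t i ≤ t j := by
  intro j hj i hi
  rcases hi.lt_or_eq with h | h
  · exact (grid_strictMono htmono j hj i h).le
  · rw [h]

theorem gridFloor_eq {n : ℕ} {t : ℕ → ℝ} (htmono : ∀ i < n, t i < t (i + 1)) {k : ℕ}
    (hk : k < n) {s : ℝ} (hs : s ∈ Ioo (t k) (t (k + 1))) : gridFloor n t s = t k := by
  unfold gridFloor
  apply IsGreatest.csSup_eq
  refine ⟨⟨⟨k, hk.le, rfl⟩, hs.1.le⟩, ?_⟩
  rintro x ⟨⟨i, hi, rfl⟩, hx⟩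
  by_contra hc
  have : k + 1 ≤ i := by
    by_contra h
    exact hc (grid_mono htmono k hk.le i (by omega))
  have := grid_mono htmono i hi (k + 1) this
  linarith [hs.2]

theorem gridCeil_eq {n : ℕ} {t : ℕ → ℝ} (htmono : ∀ i < n, t i < t (i + 1)) {k : ℕ}
    (hk : k < n) {s : ℝ} (hs : s ∈ Ioo (t k) (t (k + 1))) : gridCeil n t s = t (k + 1) := by
  unfold gridCeil
  apply IsLeast.csInf_eq
  refine ⟨⟨⟨k + 1, hk, rfl⟩, hs.2.le⟩, ?_⟩
  rintro x ⟨⟨i, hi, rfl⟩, hx⟩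
  by_contra hc
  have : i ≤ k := by
    by_contra h
    exact hc (grid_mono htmono i hi (k + 1) (by omega))
  have := grid_mono htmono k hk.le i this
  linarith [hs.1]

theorem grid_filter_eq {n : ℕ} {t : ℕ → ℝ} (htmono : ∀ i < n, t i < t (i + 1)) {k : ℕ}
    (hk : k < n) : (Finset.range n).filter (fun i => t (i + 1) ≤ t k) = Finset.range k := by
  ext i
  simp only [Finset.mem_filter, Finset.mem_range]
  constructor
  · rintro ⟨hi, h⟩
    by_contra hc
    have := grid_strictMono htmono (i + 1) (by omega) k (by omega)
    linarith
  · intro h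
    exact ⟨by omega, grid_mono htmono k hk.le (i + 1) (by omega)⟩

theorem le_gridMesh {n : ℕ} (t : ℕ → ℝ) {k : ℕ} (hk : k < n) :
    t (k + 1) - t k ≤ gridMesh n t := by
  unfold gridMesh
  exact le_ciSup (f := fun i : Fin n => t (i.1 + 1) - t i.1) (Set.finite_range _).bddAbove ⟨k, hk⟩

/-- Deterministic core. -/
theorem drift_core (I : Set ℝ) (T L : ℝ) (hL : 0 ≤ L)
    (n : ℕ) (t : ℕ → ℝ)
    (ht0 : t 0 = 0) (htmono : ∀ i < n, t i < t (i + 1))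
    (htmem : ∀ i ≤ n, t i ∈ Set.Icc (0:ℝ) T)
    (hmesh : L * gridMesh n t < 1)
    (μ : ℝ → ℝ)
    (hμosl : ∀ x ∈ I, ∀ y ∈ I, (x - y) * (μ x - μ y) ≤ L * (x - y) ^ 2)
    (w x : ℝ → ℝ) (y : ℕ → ℝ) (hw0 : w 0 = 0)
    (hint : IntervalIntegrable (fun s => μ (x s)) volume 0 T)
    (hx : ∀ i ≤ n, x (t i) = x 0 + (∫ s in (0:ℝ)..(t i), μ (x s)) + w (t i))
    (hxI : ∀ i ≤ n, x (t i) ∈ I) (hyI : ∀ i ≤ n, y i ∈ I)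
    (hy : ∀ k < n, y (k + 1) = y k + μ (y (k + 1)) * (t (k + 1) - t k) + (w (t (k + 1)) - w (t k))) :
    ∀ k ≤ n,
      ((x (t k) - y k) *
          ∏ i ∈ Finset.range k,
            (1 - (t (i + 1) - t i) *
              ((μ (x (t (i + 1))) - μ (y (i + 1))) / (x (t (i + 1)) - y (i + 1))))
        = x 0 - y 0
          + ∫ s in (0:ℝ)..(t k),
              (μ (x s) - μ (x (gridCeil n t s))) *
                ∏ i ∈ (Finset.range n).filter (fun i => t (i + 1) ≤ gridFloor n t s),
                  (1 - (t (i + 1) - t i) *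
                    ((μ (x (t (i + 1))) - μ (y (i + 1))) / (x (t (i + 1)) - y (i + 1)))))
      ∧ |x (t k) - y k|
          ≤ (1 / (1 - gridMesh n t * L)) ^ k *
            (|x 0 - y 0| + ∫ s in (0:ℝ)..(t k), |μ (x s) - μ (x (gridCeil n t s))|) := by
  set f : ℕ → ℝ := fun i => (1 - (t (i + 1) - t i) *
              ((μ (x (t (i + 1))) - μ (y (i + 1))) / (x (t (i + 1)) - y (i + 1)))) with hf
  set G : ℝ → ℝ := fun s => (μ (x s) - μ (x (gridCeil n t s))) *
      ∏ i ∈ (Finset.range n).filter (fun i => t (i + 1) ≤ gridFloor n t s), f i with hG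
  set H : ℝ → ℝ := fun s => |μ (x s) - μ (x (gridCeil n t s))| with hH
  -- local facts on each subinterval
  have hGloc : ∀ k < n, EqOn (fun s => (μ (x s) - μ (x (t (k + 1)))) * ∏ i ∈ Finset.range k, f i) G
      (Ioo (t k) (t (k + 1))) := by
    intro k hk s hs
    simp only [hG, gridFloor_eq htmono hk hs, gridCeil_eq htmono hk hs, grid_filter_eq htmono hk]
  have hHloc : ∀ k < n, EqOn (fun s => |μ (x s) - μ (x (t (k + 1)))|) H
      (Ioo (t k) (t (k + 1))) := by
    intro k hk s hs
    simp only [hH, gridCeil_eq htmono hk hs]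
  have hi : ∀ a ∈ Icc 0 T, ∀ b ∈ Icc 0 T, IntervalIntegrable (fun s => μ (x s)) volume a b := by
    intro a ha b hb
    refine hint.mono_set ?_
    rw [uIcc_of_le (ha.1.trans ha.2)]
    exact uIcc_subset_Icc ha hb
  have hi' : ∀ k < n, IntervalIntegrable (fun s => μ (x s) - μ (x (t (k + 1)))) volume
      (t k) (t (k + 1)) := fun k hk =>
    (hi _ (htmem k hk.le) _ (htmem (k + 1) hk)).sub intervalIntegrable_const
  have hGi : ∀ k < n, IntervalIntegrable G volume (t k) (t (k + 1)) := by
    intro k hk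
    refine ((hi' k hk).mul_const (∏ i ∈ Finset.range k, f i)).congr_uIoo ?_
    · rw [uIoo_of_le (htmono k hk).le]; exact hGloc k hk
  have hHi : ∀ k < n, IntervalIntegrable H volume (t k) (t (k + 1)) := by
    intro k hk
    refine ((hi' k hk).abs).congr_uIoo ?_
    rw [uIoo_of_le (htmono k hk).le]; exact hHloc k hk
  have hstep : ∀ k < n, (x (t (k + 1)) - y (k + 1)) * f k = (x (t k) - y k)
      + ∫ s in (t k)..(t (k + 1)), (μ (x s) - μ (x (t (k + 1)))) := by
    intro k hk
    have e0 : (0:ℝ) ∈ Icc 0 T := ht0 ▸ htmem 0 (by omega)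
    have e1 := hx k hk.le
    have e2 := hx (k + 1) hk
    have e3 := hy k hk
    have e4 := intervalIntegral.integral_add_adjacent_intervals
      (hi _ e0 _ (htmem k hk.le)) (hi _ (htmem k hk.le) _ (htmem (k + 1) hk))
    rw [intervalIntegral.integral_sub (hi _ (htmem k hk.le) _ (htmem (k + 1) hk))
      intervalIntegrable_const, intervalIntegral.integral_const, smul_eq_mul]
    have e5 : (x (t (k + 1)) - y (k + 1)) *
        ((μ (x (t (k + 1))) - μ (y (k + 1))) / (x (t (k + 1)) - y (k + 1)))
        = μ (x (t (k + 1))) - μ (y (k + 1)) := by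
      by_cases h : x (t (k + 1)) - y (k + 1) = 0
      · rw [sub_eq_zero.mp h]; simp
      · field_simp
    have e6 : (x (t (k + 1)) - y (k + 1)) * f k = (x (t (k + 1)) - y (k + 1))
        - (t (k + 1) - t k) * (μ (x (t (k + 1))) - μ (y (k + 1))) := by
      rw [← e5]; simp only [hf]; ring
    rw [e6]
    linarith
  have hfge : ∀ k < n, 1 - gridMesh n t * L ≤ f k := by
    intro k hk
    have h1 : (μ (x (t (k + 1))) - μ (y (k + 1))) / (x (t (k + 1)) - y (k + 1)) ≤ L := by
      by_cases h : x (t (k + 1)) - y (k + 1) = 0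
      · rw [h, div_zero]; exact hL
      · have h2 := hμosl _ (hxI (k + 1) hk) _ (hyI (k + 1) hk)
        have h3 : 0 < (x (t (k + 1)) - y (k + 1)) ^ 2 := by positivity
        have h4 : (μ (x (t (k + 1))) - μ (y (k + 1))) / (x (t (k + 1)) - y (k + 1))
          = ((x (t (k + 1)) - y (k + 1)) * (μ (x (t (k + 1))) - μ (y (k + 1))))
            / (x (t (k + 1)) - y (k + 1)) ^ 2 := by field_simp
        rw [h4, div_le_iff₀ h3]; exact h2
    have h5 := le_gridMesh t hk
    have h6 : 0 ≤ t (k + 1) - t k := by linarith [htmono k hk]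
    have h7 := mul_le_mul_of_nonneg_left h1 h6
    have h8 := mul_le_mul_of_nonneg_right h5 hL
    simp only [hf]
    linarith
  have hcpos : 0 < 1 - gridMesh n t * L := by linarith
  suffices hmain : ∀ k ≤ n, IntervalIntegrable G volume 0 (t k) ∧
      IntervalIntegrable H volume 0 (t k) ∧
      ((x (t k) - y k) * ∏ i ∈ Finset.range k, f i = x 0 - y 0 + ∫ s in (0:ℝ)..(t k), G s) ∧
      |x (t k) - y k| ≤ (1 / (1 - gridMesh n t * L)) ^ k *
            (|x 0 - y 0| + ∫ s in (0:ℝ)..(t k), H s) by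
    intro k hk
    exact (hmain k hk).2.2
  intro k
  induction k with
  | zero => intro _; simp [ht0]
  | succ k ih =>
    intro hk
    obtain ⟨a1, a2, a3, a4⟩ := ih (by omega)
    have hk' : k < n := hk
    refine ⟨a1.trans (hGi k hk'), a2.trans (hHi k hk'), ?_, ?_⟩
    · rw [← intervalIntegral.integral_add_adjacent_intervals a1 (hGi k hk'),
        ← intervalIntegral.integral_congr_Ioo_of_le (htmono k hk').le (hGloc k hk'),
        intervalIntegral.integral_mul_const, Finset.prod_range_succ]
      have := hstep k hk'
      calc _ = ((x (t (k + 1)) - y (k + 1)) * f k) * ∏ i ∈ Finset.range k, f i := by ring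
        _ = _ := by rw [this, add_mul, a3]; ring
    · have hs := hstep k hk'
      have hJ0 := intervalIntegral.abs_integral_le_integral_abs
        (f := fun s => μ (x s) - μ (x (t (k + 1)))) (μ := volume) (htmono k hk').le
      rw [intervalIntegral.integral_congr_Ioo_of_le (htmono k hk').le (hHloc k hk')] at hJ0
      rw [← intervalIntegral.integral_add_adjacent_intervals a2 (hHi k hk')]
      set J := ∫ s in (t k)..(t (k + 1)), H s
      set A := ∫ s in (0:ℝ)..(t k), H s
      have hJ : 0 ≤ J := (abs_nonneg _).trans hJ0
      have hmesh0 : 0 ≤ gridMesh n t * L :=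
        mul_nonneg (by linarith [le_gridMesh t hk', htmono k hk']) hL
      have hc1 : 1 ≤ 1 / (1 - gridMesh n t * L) := by
        rw [le_div_iff₀ hcpos]; linarith
      have hck := one_le_pow₀ hc1 (n := k)
      have h1 : |x (t (k + 1)) - y (k + 1)| * (1 - gridMesh n t * L) ≤ |x (t k) - y k| + J := by
        calc _ ≤ |x (t (k + 1)) - y (k + 1)| * |f k| := by
              gcongr; exact (hfge k hk').trans (le_abs_self _)
          _ = |(x (t k) - y k)
      + ∫ s in (t k)..(t (k + 1)), (μ (x s) - μ (x (t (k + 1))))| := by rw [← abs_mul, hs]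
          _ ≤ _ := (abs_add_le _ _).trans (by linarith)
      rw [pow_succ, mul_assoc, mul_comm (1 / _) (_ + _), ← mul_assoc, mul_one_div,
        le_div_iff₀ hcpos]
      have h2 := mul_le_mul_of_nonneg_right hck hJ
      linarith

theorem drift_implicit_Euler_representation_and_pathwise_bound
    {Ω : Type*} [MeasurableSpace Ω] (P : Measure Ω) [IsProbabilityMeasure P]
    (I : Set ℝ) (hInonempty : I.Nonempty) (hIopen : IsOpen I) (hIconn : I.OrdConnected)
    (T L : ℝ) (hT : 0 ≤ T) (hL : 0 ≤ L)
    (n : ℕ) (t : ℕ → ℝ)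
    (ht0 : t 0 = 0) (htn : t n = T) (htmono : ∀ i < n, t i < t (i + 1))
    (htmem : ∀ i ≤ n, t i ∈ Set.Icc (0:ℝ) T)
    (hmesh : L * gridMesh n t < 1)
    (μ : ℝ → ℝ) (hμmeas : Measurable μ)
    (hμosl : ∀ x ∈ I, ∀ y ∈ I, (x - y) * (μ x - μ y) ≤ L * (x - y) ^ 2)
    (F : ℝ → MeasurableSpace Ω)
    (hF_mono : ∀ s u : ℝ, s ≤ u → F s ≤ F u)
    (hF_le : ∀ u : ℝ, F u ≤ (inferInstance : MeasurableSpace Ω))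
    (W X : ℝ → Ω → ℝ)
    (hW0 : ∀ ω, W 0 ω = 0)
    (hWadapt : ∀ u ∈ Set.Icc (0:ℝ) T, @Measurable Ω ℝ (F u) _ (W u))
    (hWcont : ∀ ω, ContinuousOn (fun u => W u ω) (Set.Icc 0 T))
    (hWlaw : ∀ s u : ℝ, 0 ≤ s → s ≤ u → u ≤ T →
      Measure.map (fun ω => W u ω - W s ω) P = gaussianReal 0 (Real.toNNReal (u - s)))
    (hWindep : ∀ s u : ℝ, 0 ≤ s → s ≤ u → u ≤ T →
      Indep (MeasurableSpace.comap (fun ω => W u ω - W s ω) inferInstance) (F s) P)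
    (hXmem : ∀ u ∈ Set.Icc (0:ℝ) T, ∀ ω, X u ω ∈ closure I)
    (hXadapt : ∀ u ∈ Set.Icc (0:ℝ) T, @Measurable Ω ℝ (F u) _ (X u))
    (hXcont : ∀ ω, ContinuousOn (fun u => X u ω) (Set.Icc 0 T))
    (hXint : ∀ᵐ ω ∂P, IntervalIntegrable (fun s => |μ (X s ω)|) volume 0 T)
    (hSDE : ∀ u ∈ Set.Icc (0:ℝ) T, ∀ᵐ ω ∂P,
      X u ω = X 0 ω + (∫ s in (0:ℝ)..u, μ (X s ω)) + W u ω)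
    (Y : ℕ → Ω → ℝ)
    (hYmeas : ∀ k ≤ n, Measurable (Y k))
    (hYmem : ∀ k ≤ n, ∀ ω, Y k ω ∈ I)
    (hYrec : ∀ k < n, ∀ᵐ ω ∂P,
      Y (k + 1) ω = Y k ω + μ (Y (k + 1) ω) * (t (k + 1) - t k)
        + (W (t (k + 1)) ω - W (t k) ω))
    (hboundary : ∀ i ≤ n, P {ω | X (t i) ω ∈ frontier I} = 0) :
    ∀ᵐ ω ∂P, ∀ k ≤ n,
      ((X (t k) ω - Y k ω) *
          ∏ i ∈ Finset.range k,
            (1 - (t (i + 1) - t i) *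
              ((μ (X (t (i + 1)) ω) - μ (Y (i + 1) ω)) / (X (t (i + 1)) ω - Y (i + 1) ω)))
        = X 0 ω - Y 0 ω
          + ∫ s in (0:ℝ)..(t k),
              (μ (X s ω) - μ (X (gridCeil n t s) ω)) *
                ∏ i ∈ (Finset.range n).filter (fun i => t (i + 1) ≤ gridFloor n t s),
                  (1 - (t (i + 1) - t i) *
                    ((μ (X (t (i + 1)) ω) - μ (Y (i + 1) ω)) / (X (t (i + 1)) ω - Y (i + 1) ω))))
      ∧ |X (t k) ω - Y k ω|
          ≤ (1 / (1 - gridMesh n t * L)) ^ k *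
            (|X 0 ω - Y 0 ω| + ∫ s in (0:ℝ)..(t k), |μ (X s ω) - μ (X (gridCeil n t s) ω)|) := by
  have hall1 : ∀ᵐ ω ∂P, ∀ i ≤ n,
      X (t i) ω = X 0 ω + (∫ s in (0:ℝ)..(t i), μ (X s ω)) + W (t i) ω := by
    rw [ae_all_iff]; intro i
    by_cases h : i ≤ n
    · filter_upwards [hSDE (t i) (htmem i h)] with ω hω _ using hω
    · exact Eventually.of_forall fun ω h' => absurd h' h
  have hall2 : ∀ᵐ ω ∂P, ∀ k < n, Y (k + 1) ω = Y k ω + μ (Y (k + 1) ω) * (t (k + 1) - t k)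
        + (W (t (k + 1)) ω - W (t k) ω) := by
    rw [ae_all_iff]; intro i
    by_cases h : i < n
    · filter_upwards [hYrec i h] with ω hω _ using hω
    · exact Eventually.of_forall fun ω h' => absurd h' h
  have hall3 : ∀ᵐ ω ∂P, ∀ i ≤ n, X (t i) ω ∉ frontier I := by
    rw [ae_all_iff]; intro i
    by_cases h : i ≤ n
    · have h0 : ∀ᵐ ω ∂P, X (t i) ω ∉ frontier I := by
        rw [ae_iff]; simpa using hboundary i h
      filter_upwards [h0] with ω hω _ using hω
    · exact Eventually.of_forall fun ω h' => absurd h' h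
  filter_upwards [hall1, hall2, hall3, hXint] with ω h1 h2 h3 h4
  refine drift_core I T L hL n t ht0 htmono htmem hmesh μ hμosl (fun s => W s ω)
    (fun s => X s ω) (fun k => Y k ω) (hW0 ω) ?_ h1 ?_ (fun i hi => hYmem i hi ω) h2
  · refine (IntervalIntegrable.intervalIntegrable_norm_iff ?_).mp h4
    rw [uIoc_of_le hT]
    have hm : AEMeasurable (fun s => X s ω) (volume.restrict (Ioc 0 T)) :=
      ((hXcont ω).mono Ioc_subset_Icc_self).aemeasurable measurableSet_Ioc
    exact (hμmeas.comp_aemeasurable hm).aestronglyMeasurable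
  · intro i hi
    have hc := hXmem (t i) (htmem i hi) ω
    by_contra hn
    exact h3 i hi ⟨hc, fun hh => hn (interior_subset hh)⟩

end
end

section
/- Let d, m ∈ ℕ, c, c̃, T ∈ [0,∞), p ∈ [2,∞), let O ⊆ ℝ^d be a Borel set, let μ : O → ℝ^d and σ : O → ℝ^{d×m} be Borel measurable, let (Ω, 𝓕, ℙ, (𝓕_t)_{t∈[0,T]}) be a filtered probability space, let W : [0,T]×Ω → ℝ^m be a standard (𝓕_t)-Brownian motion, let ξ : Ω → O be 𝓕₀-measurable with E[‖μ(ξ)‖^p] < ∞, assume ⟨x−y, μ(x)−μ(y)⟩ ≤ c‖x−y‖² and ⟨x, μ(x)⟩ + ((p−1)/2)·‖σ(x)‖_{HS}² ≤ c̃(1+‖x‖²) for all x, y ∈ O (Euclidean inner product and norm, Hilbert–Schmidt norm), and assume that for every t ∈ (0, 1/c) the map O ∋ x ↦ x − t·μ(x) ∈ ℝ^d is surjective. Then: (a) there exists a unique family of stochastic processes Y^h : (ℕ₀ ∩ [0, T/h])×Ω → O, indexed by h ∈ (0,T] ∩ (0, 1/c), satisfying Y₀^h = ξ and Y_n^h =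 Y_{n−1}^h + μ(Y_n^h)·h + σ(Y_{n−1}^h)(W_{nh} − W_{(n−1)h}) for all n ∈ ℕ ∩ [0, T/h]; and (b) there exists ρ ∈ (0,∞) such that for all q ∈ [0, p/2] it holds that limsup_{h↘0} sup_{n∈ℕ₀∩[0,T/h]} E[(1+‖Y_n^h‖²)^q] ≤ e^{ρT}·E[(1+‖ξ‖²)^q] and sup_{h∈(0,T]∩(0,1/(4c)]} sup_{n∈ℕ₀∩[0,T/h]} E[(1+‖Y_n^h‖²)^q] ≤ e^{(4c+ρ)T}·E[(1 + (‖ξ‖ + T‖μ(ξ)‖)²)^q]. -/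
open MeasureTheory ProbabilityTheory Filter Set
open scoped ENNReal NNReal RealInnerProductSpace

noncomputable section

attribute [local instance] Matrix.frobeniusSeminormedAddCommGroup
  Matrix.frobeniusNormedAddCommGroup

/-- Action of a `d × m` matrix on a vector of `EuclideanSpace ℝ (Fin m)`. -/
def matMulVec {d m : ℕ} (A : Matrix (Fin d) (Fin m) ℝ) (v : EuclideanSpace ℝ (Fin m)) :
    EuclideanSpace ℝ (Fin d) :=
  (EuclideanSpace.equiv (Fin d) ℝ).symm (A.mulVec ((EuclideanSpace.equiv (Fin m) ℝ) v))

/-- The drift-implicit Euler scheme with initial value `ξ`, drift `b`, diffusion `σ`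
and driving noise `W`, for all step sizes `h ∈ (0,T] ∩ (0, 1/cdrift)`. -/
def ImplicitEulerScheme {Ω : Type*} (d m : ℕ) (T cdrift : ℝ)
    (O : Set (EuclideanSpace ℝ (Fin d)))
    (b : EuclideanSpace ℝ (Fin d) → EuclideanSpace ℝ (Fin d))
    (σ : EuclideanSpace ℝ (Fin d) → Matrix (Fin d) (Fin m) ℝ)
    (ξ : Ω → EuclideanSpace ℝ (Fin d))
    (W : ℝ → Ω → EuclideanSpace ℝ (Fin m))
    (Y : ℝ → ℕ → Ω → EuclideanSpace ℝ (Fin d)) : Prop :=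
  ∀ h : ℝ, h ∈ Set.Ioc (0:ℝ) T → h * cdrift < 1 →
    (∀ ω, Y h 0 ω = ξ ω) ∧
    ∀ n : ℕ, 1 ≤ n → (n : ℝ) ≤ T / h → ∀ ω,
      Y h n ω ∈ O ∧
      Y h n ω = Y h (n - 1) ω + h • b (Y h n ω)
        + matMulVec (σ (Y h (n - 1) ω)) (W (n * h) ω - W (((n : ℕ) - 1 : ℕ) * h) ω)

lemma aux_int_rpow (r : ℝ) (hr : 0 ≤ r) :
    Integrable (fun x : ℝ => (1 + x ^ 2) ^ r) (gaussianReal 0 1) := by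
  have h1 : Integrable (fun x : ℝ => ‖x‖ ^ (2 * ⌈r⌉₊)) (gaussianReal 0 1) := by
    have := (memLp_id_gaussianReal (μ := 0) (v := 1) ((2 * ⌈r⌉₊ : ℕ) : ℝ≥0))
    have h := MemLp.integrable_norm_pow' (f := (id : ℝ → ℝ)) (p := 2 * ⌈r⌉₊) (by simpa using this)
    simpa using h
  refine Integrable.mono' (((integrable_const (1:ℝ)).add h1).const_mul (2 ^ (⌈r⌉₊ - 1))) ?_ ?_
  · exact (Continuous.rpow_const (by fun_prop) (fun x => Or.inr hr)).aestronglyMeasurable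
  · refine Eventually.of_forall fun x => ?_
    have h0 : (1:ℝ) ≤ 1 + x ^ 2 := by nlinarith [sq_nonneg x]
    rw [Real.norm_of_nonneg (by positivity)]
    calc (1 + x ^ 2) ^ r ≤ (1 + x ^ 2) ^ (⌈r⌉₊ : ℝ) :=
          Real.rpow_le_rpow_of_exponent_le h0 (Nat.le_ceil r)
      _ = (1 + x ^ 2) ^ ⌈r⌉₊ := Real.rpow_natCast _ _
      _ ≤ _ := by
          have := add_pow_le (zero_le_one (α := ℝ)) (sq_nonneg x) ⌈r⌉₊
          simpa [pow_mul, sq_abs] using this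

lemma aux_int_bound (f : ℝ → ℝ) (hf : Continuous f) (C r : ℝ) (hr : 0 ≤ r)
    (hb : ∀ x, |f x| ≤ C * (1 + x ^ 2) ^ r) : Integrable f (gaussianReal 0 1) :=
  Integrable.mono' ((aux_int_rpow r hr).const_mul C) hf.aestronglyMeasurable
    (Eventually.of_forall hb)

lemma aux_stein (f f' : ℝ → ℝ) (hd : ∀ x, HasDerivAt f (f' x) x)
    (hf : Integrable f (gaussianReal 0 1))
    (hf' : Integrable f' (gaussianReal 0 1))
    (hxf : Integrable (fun x => x * f x) (gaussianReal 0 1)) :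
    ∫ x, x * f x ∂(gaussianReal 0 1) = ∫ x, f' x ∂(gaussianReal 0 1) := by
  have key : ∀ g : ℝ → ℝ, Integrable g (gaussianReal 0 1) →
      Integrable (fun x => g x * gaussianPDFReal 0 1 x) := by
    intro g hg
    rw [gaussianReal_of_var_ne_zero _ one_ne_zero,
      integrable_withDensity_iff (measurable_gaussianPDF _ _)
        (Eventually.of_forall fun x => gaussianPDF_lt_top)] at hg
    simpa [toReal_gaussianPDF] using hg
  have hv : ∀ x : ℝ, HasDerivAt (gaussianPDFReal 0 1) (-x * gaussianPDFReal 0 1 x) x := by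
    intro x
    rw [gaussianPDFReal_def]
    have h1 : HasDerivAt (fun x : ℝ => -(x - 0) ^ 2 / (2 * ((1 : ℝ≥0) : ℝ))) (-x) x := by
      have := (((hasDerivAt_id x).sub_const 0).pow 2).neg.div_const (2 * ((1 : ℝ≥0) : ℝ))
      refine this.congr_deriv ?_
      simp
      ring
    refine (h1.exp.const_mul (√(2 * Real.pi * ((1 : ℝ≥0) : ℝ)))⁻¹).congr_deriv ?_
    ring
  have := integral_mul_deriv_eq_deriv_mul_of_integrable (u := f) (u' := f')
    (v := gaussianPDFReal 0 1) (v' := fun x => -x * gaussianPDFReal 0 1 x)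
    (fun x _ => hd x) (fun x _ => hv x)
    (by
      refine (key _ hxf).neg.congr (Eventually.of_forall fun x => ?_)
      simp; ring)
    (key _ hf') (key _ hf)
  rw [integral_gaussianReal_eq_integral_smul one_ne_zero,
    integral_gaussianReal_eq_integral_smul one_ne_zero]
  simp only [smul_eq_mul]
  have e1 : ∫ x, gaussianPDFReal 0 1 x * (x * f x)
      = - ∫ x, f x * (-x * gaussianPDFReal 0 1 x) := by
    rw [← integral_neg]; congr 1; ext x; ring
  rw [e1, this, neg_neg]; congr 1; ext x; ring

lemma aux_gauss1 (θ K α β : ℝ) (hθ : 1 ≤ θ) (hK : 0 < K) :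
    Integrable (fun x : ℝ => (K + (α + β * x) ^ 2) ^ θ) (gaussianReal 0 1) ∧
    ∫ x, (K + (α + β * x) ^ 2) ^ θ ∂(gaussianReal 0 1)
      ≤ (K + α ^ 2 + (2 * θ - 1) * β ^ 2) ^ θ := by
  set c : ℝ := 2 * θ - 1 with hc
  have hc1 : 1 ≤ c := by linarith
  have hcβ : 0 ≤ c * β ^ 2 := by positivity
  set M : ℝ := K + c * β ^ 2 + 2 * α ^ 2 + 2 * β ^ 2 with hM
  have hM0 : 0 < M := by positivity
  set G : ℝ → ℝ → ℝ := fun s x => K + c * β ^ 2 * (1 - s ^ 2) + (α + s * β * x) ^ 2 with hG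
  have hGK : ∀ s ∈ Icc (0:ℝ) 1, ∀ x, K + (α + s * β * x) ^ 2 ≤ G s x := by
    intro s hs x
    have h1 : 0 ≤ 1 - s ^ 2 := by nlinarith [hs.1, hs.2]
    have := mul_nonneg hcβ h1
    simp only [hG]; linarith
  have hGpos : ∀ s ∈ Icc (0:ℝ) 1, ∀ x, 0 < G s x := fun s hs x => by
    have := hGK s hs x
    nlinarith [sq_nonneg (α + s * β * x)]
  have hyM : ∀ s ∈ Icc (0:ℝ) 1, ∀ x : ℝ, (α + s * β * x) ^ 2 ≤ 2 * α ^ 2 + 2 * β ^ 2 * x ^ 2 := by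
    intro s hs x
    have h1 : 0 ≤ 1 - s ^ 2 := by nlinarith [hs.1, hs.2]
    nlinarith [sq_nonneg (α - s * β * x), mul_nonneg h1 (sq_nonneg (β * x))]
  have hGM : ∀ s ∈ Icc (0:ℝ) 1, ∀ x, G s x ≤ M * (1 + x ^ 2) := by
    intro s hs x
    have h1 := hyM s hs x
    have h2 := mul_nonneg hcβ (sq_nonneg s)
    have h3 := mul_nonneg (show 0 ≤ K + c * β ^ 2 + 2 * α ^ 2 by positivity) (sq_nonneg x)
    have h4 := sq_nonneg β
    simp only [hG, hM]; nlinarith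
  have hGpow : ∀ r : ℝ, 0 ≤ r → ∀ s ∈ Icc (0:ℝ) 1, ∀ x,
      G s x ^ r ≤ M ^ r * (1 + x ^ 2) ^ r := by
    intro r hr s hs x
    rw [← Real.mul_rpow hM0.le (by positivity)]
    exact Real.rpow_le_rpow (hGpos s hs x).le (hGM s hs x) hr
  have hGx : ∀ s, Continuous (G s) := fun s => by simp only [hG]; fun_prop
  have hGs : ∀ x, Continuous (fun s => G s x) := fun x => by simp only [hG]; fun_prop
  have hGrc : ∀ (r : ℝ), ∀ s ∈ Icc (0:ℝ) 1, Continuous (fun x => G s x ^ r) := fun r s hs =>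
    (hGx s).rpow_const (fun x => Or.inl (hGpos s hs x).ne')
  have hFint : ∀ s ∈ Icc (0:ℝ) 1, Integrable (fun x => G s x ^ θ) (gaussianReal 0 1) := by
    intro s hs
    refine aux_int_bound _ (hGrc θ s hs) (M ^ θ) θ (by linarith) fun x => ?_
    rw [abs_of_nonneg (Real.rpow_nonneg (hGpos s hs x).le _)]
    exact hGpow θ (by linarith) s hs x
  set F' : ℝ → ℝ → ℝ := fun s x =>
    (-(2 * c * β ^ 2 * s) + 2 * (α + s * β * x) * (β * x)) * θ * G s x ^ (θ - 1) with hF'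
  have hFd : ∀ s ∈ Icc (0:ℝ) 1, ∀ x, HasDerivAt (fun s => G s x ^ θ) (F' s x) s := by
    intro s hs x
    refine HasDerivAt.rpow_const ?_ (Or.inl (hGpos s hs x).ne')
    have h1 : HasDerivAt (fun s : ℝ => K + c * β ^ 2 * (1 - s ^ 2))
        (c * β ^ 2 * (-(2 * s))) s := by
      have := (((hasDerivAt_pow 2 s).const_sub 1).const_mul (c * β ^ 2)).const_add K
      refine this.congr_deriv ?_
      simp
    have h2 : HasDerivAt (fun s : ℝ => (α + s * β * x) ^ 2)
        (2 * (α + s * β * x) * (β * x)) s := by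
      have := ((((hasDerivAt_id s).mul_const β).mul_const x).const_add α).fun_pow 2
      refine this.congr_deriv ?_
      simp
    refine (h1.add h2).congr_deriv ?_
    ring
  have hF'b : ∀ s ∈ Icc (0:ℝ) 1, ∀ x, ‖F' s x‖ ≤ 3 * θ * M ^ θ * (1 + x ^ 2) ^ θ := by
    intro s hs x
    have hA : |(-(2 * c * β ^ 2 * s) + 2 * (α + s * β * x) * (β * x))| ≤ 3 * (M * (1 + x ^ 2)) := by
      have h1 := hyM s hs x
      have h2 : c * β ^ 2 * s ≤ c * β ^ 2 := by nlinarith [hs.2]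
      have h2' : 0 ≤ c * β ^ 2 * s := mul_nonneg hcβ hs.1
      have h3 := mul_nonneg (show 0 ≤ K + c * β ^ 2 + 2 * α ^ 2 by positivity) (sq_nonneg x)
      have h4 := sq_nonneg (α + s * β * x + β * x)
      have h5 := sq_nonneg (α + s * β * x - β * x)
      have h6 := sq_nonneg (β * x)
      have h7 := sq_nonneg β
      have h8 := sq_nonneg α
      simp only [hM]
      rw [abs_le]; constructor <;> nlinarith
    have hB := hGpow (θ - 1) (by linarith) s hs x
    have hG0 : 0 ≤ G s x ^ (θ - 1) := Real.rpow_nonneg (hGpos s hs x).le _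
    rw [Real.norm_eq_abs, hF', abs_mul, abs_mul, abs_of_nonneg hG0,
      abs_of_nonneg (show 0 ≤ θ by linarith)]
    calc _ ≤ 3 * (M * (1 + x ^ 2)) * θ * (M ^ (θ - 1) * (1 + x ^ 2) ^ (θ - 1)) := by
          gcongr
      _ = 3 * θ * (M ^ (θ - 1) * M) * ((1 + x ^ 2) ^ (θ - 1) * (1 + x ^ 2)) := by ring
      _ = _ := by
          rw [← Real.rpow_add_one hM0.ne', ← Real.rpow_add_one (by positivity)]
          simp
  set ψ : ℝ → ℝ := fun s => ∫ x, G s x ^ θ ∂(gaussianReal 0 1) with hψ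
  have hbi : Integrable (fun x : ℝ => 3 * θ * M ^ θ * (1 + x ^ 2) ^ θ) (gaussianReal 0 1) :=
    (aux_int_rpow θ (by linarith)).const_mul _
  have hcont : ContinuousOn ψ (Icc 0 1) := by
    refine continuousOn_of_dominated (bound := fun x => M ^ θ * (1 + x ^ 2) ^ θ)
      (fun s hs => (hFint s hs).1) ?_
      ((aux_int_rpow θ (by linarith)).const_mul _) ?_
    · intro s hs
      refine Eventually.of_forall fun x => ?_
      rw [Real.norm_of_nonneg (Real.rpow_nonneg (hGpos s hs x).le _)]
      exact hGpow θ (by linarith) s hs x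
    · refine Eventually.of_forall fun x => ?_
      exact (hGs x).continuousOn.rpow_const (fun s hs => Or.inl (hGpos s hs x).ne')
  have hF'c : ∀ s ∈ Icc (0:ℝ) 1, Continuous (F' s) := fun s hs => by
    simp only [hF']
    exact Continuous.mul (by fun_prop) (hGrc _ s hs)
  have hder : ∀ s ∈ Ioo (0:ℝ) 1, Integrable (F' s) (gaussianReal 0 1) ∧
      HasDerivAt ψ (∫ x, F' s x ∂(gaussianReal 0 1)) s := by
    intro s hs
    have hs' := Ioo_subset_Icc_self hs
    refine hasDerivAt_integral_of_dominated_loc_of_deriv_le (s := Ioo 0 1)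
      (F := fun s x => G s x ^ θ)
      (Ioo_mem_nhds hs.1 hs.2) ?_ (hFint s hs') (hF'c s hs').aestronglyMeasurable
      (Eventually.of_forall fun x t ht => hF'b t (Ioo_subset_Icc_self ht) x) hbi
      (Eventually.of_forall fun x t ht => hFd t (Ioo_subset_Icc_self ht) x)
    filter_upwards [Ioo_mem_nhds hs.1 hs.2] with t ht
    exact (hFint t (Ioo_subset_Icc_self ht)).1
  have hneg : ∀ s ∈ Ioo (0:ℝ) 1, ∫ x, F' s x ∂(gaussianReal 0 1) ≤ 0 := by
    intro s hs
    have hs' := Ioo_subset_Icc_self hs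
    have hI1 : Integrable (fun x => G s x ^ (θ - 1)) (gaussianReal 0 1) := by
      refine aux_int_bound _ (hGrc _ s hs') (M ^ (θ - 1)) (θ - 1) (by linarith) fun x => ?_
      rw [abs_of_nonneg (Real.rpow_nonneg (hGpos s hs' x).le _)]
      exact hGpow _ (by linarith) s hs' x
    have hbd : ∀ z : ℝ → ℝ, Continuous z → (∀ x, |z x| ≤ (1 + M) * (1 + x ^ 2)) →
        Integrable (fun x => z x * G s x ^ (θ - 1)) (gaussianReal 0 1) := by
      intro z hz hzb
      refine aux_int_bound _ (hz.mul (hGrc _ s hs')) ((1 + M) * M ^ (θ - 1)) θ (by linarith)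
        fun x => ?_
      have hG0 : 0 ≤ G s x ^ (θ - 1) := Real.rpow_nonneg (hGpos s hs' x).le _
      rw [abs_mul, abs_of_nonneg hG0]
      calc _ ≤ (1 + M) * (1 + x ^ 2) * (M ^ (θ - 1) * (1 + x ^ 2) ^ (θ - 1)) := by
            gcongr
            · exact hzb x
            · exact hGpow _ (by linarith) s hs' x
        _ = (1 + M) * M ^ (θ - 1) * ((1 + x ^ 2) ^ (θ - 1) * (1 + x ^ 2)) := by ring
        _ = _ := by
            rw [← Real.rpow_add_one (by positivity)]
            simp
    have hym : ∀ x : ℝ, (α + s * β * x) ^ 2 ≤ M * (1 + x ^ 2) := fun x => by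
      have := hGK s hs' x
      have := hGM s hs' x
      linarith
    have hf : Integrable (fun x => (α + s * β * x) * G s x ^ (θ - 1)) (gaussianReal 0 1) := by
      refine hbd _ (by fun_prop) fun x => ?_
      have := hym x
      rw [abs_le]; constructor <;>
        nlinarith [sq_nonneg (α + s * β * x + 1), sq_nonneg (α + s * β * x - 1), sq_nonneg x]
    have hxf : Integrable (fun x => x * ((α + s * β * x) * G s x ^ (θ - 1)))
        (gaussianReal 0 1) := by
      have : Integrable (fun x => (x * (α + s * β * x)) * G s x ^ (θ - 1)) (gaussianReal 0 1) := by
        refine hbd _ (by fun_prop) fun x => ?_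
        have := hym x
        rw [abs_le]; constructor <;>
          nlinarith [sq_nonneg (α + s * β * x + x), sq_nonneg (α + s * β * x - x), sq_nonneg x]
      refine this.congr (Eventually.of_forall fun x => ?_)
      simp only; ring
    set f' : ℝ → ℝ := fun x => s * β * G s x ^ (θ - 1) +
      (α + s * β * x) * (2 * (α + s * β * x) * (s * β) * (θ - 1) * G s x ^ (θ - 1 - 1)) with hf'
    have hyG : ∀ x, (α + s * β * x) ^ 2 * G s x ^ (θ - 1 - 1) ≤ G s x ^ (θ - 1) := by
      intro x
      have h1 : G s x ^ (θ - 1) = G s x * G s x ^ (θ - 1 - 1) := by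
        rw [mul_comm, ← Real.rpow_add_one (hGpos s hs' x).ne']; simp
      rw [h1]
      have : 0 ≤ G s x ^ (θ - 1 - 1) := Real.rpow_nonneg (hGpos s hs' x).le _
      have h2 := hGK s hs' x
      gcongr; linarith
    have hyG0 : ∀ x, 0 ≤ (α + s * β * x) ^ 2 * G s x ^ (θ - 1 - 1) := fun x =>
      mul_nonneg (sq_nonneg _) (Real.rpow_nonneg (hGpos s hs' x).le _)
    have hf'eq : ∀ x, f' x = s * β * (G s x ^ (θ - 1) +
        2 * (θ - 1) * ((α + s * β * x) ^ 2 * G s x ^ (θ - 1 - 1))) := by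
      intro x; simp only [hf']; ring
    have hf'int : Integrable f' (gaussianReal 0 1) := by
      refine Integrable.mono' (hI1.const_mul (|s * β| * c)) ?_ (Eventually.of_forall fun x => ?_)
      · refine Continuous.aestronglyMeasurable ?_
        have := hGrc (θ - 1) s hs'
        have := hGrc (θ - 1 - 1) s hs'
        simp only [hf']
        fun_prop
      · have h1 := hyG x
        have h2 := hyG0 x
        have h3 : 0 ≤ G s x ^ (θ - 1) := Real.rpow_nonneg (hGpos s hs' x).le _
        have h4 := mul_le_mul_of_nonneg_left h1 (show 0 ≤ 2 * (θ - 1) by linarith)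
        have h5 := mul_nonneg (show 0 ≤ 2 * (θ - 1) by linarith) h2
        rw [hf'eq, Real.norm_eq_abs, abs_mul,
          abs_of_nonneg (show 0 ≤ G s x ^ (θ - 1) +
            2 * (θ - 1) * ((α + s * β * x) ^ 2 * G s x ^ (θ - 1 - 1)) by linarith),
          mul_assoc (|s * β|) c]
        refine mul_le_mul_of_nonneg_left ?_ (abs_nonneg (s * β))
        rw [hc]
        linarith
    have hder' : ∀ x, HasDerivAt (fun x => (α + s * β * x) * G s x ^ (θ - 1)) (f' x) x := by
      intro x
      have h1 : HasDerivAt (fun x : ℝ => α + s * β * x) (s * β) x := by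
        simpa using ((hasDerivAt_id x).const_mul (s * β)).const_add α
      have h2 : HasDerivAt (fun x : ℝ => G s x) (2 * (α + s * β * x) * (s * β)) x := by
        refine ((h1.fun_pow 2).const_add (K + c * β ^ 2 * (1 - s ^ 2))).congr_deriv ?_
        simp
      exact h1.mul (h2.rpow_const (Or.inl (hGpos s hs' x).ne'))
    have hst := aux_stein _ f' hder' hf hf'int hxf
    have e1 : ∫ x, F' s x ∂(gaussianReal 0 1)
        = -(2 * c * β ^ 2 * s * θ) * ∫ x, G s x ^ (θ - 1) ∂(gaussianReal 0 1)
          + 2 * θ * β * ∫ x, x * ((α + s * β * x) * G s x ^ (θ - 1)) ∂(gaussianReal 0 1) := by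
      rw [← integral_const_mul, ← integral_const_mul,
        ← integral_add (hI1.const_mul _) (hxf.const_mul _)]
      congr 1; ext x; simp only [hF']; ring
    rw [e1, hst, ← integral_const_mul, ← integral_const_mul,
        ← integral_add (hI1.const_mul _) (hf'int.const_mul _)]
    refine integral_nonpos fun x => ?_
    simp only [Pi.zero_apply]
    rw [hf'eq]
    have h4 := mul_le_mul_of_nonneg_left (hyG x) (show 0 ≤ 2 * (θ - 1) by linarith)
    have h6 : 0 ≤ 2 * θ * s * β ^ 2 := by have := hs.1; positivity
    have h5 := mul_le_mul_of_nonneg_left h4 h6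
    simp only [hc]
    nlinarith
  have hanti : AntitoneOn ψ (Icc 0 1) := by
    refine antitoneOn_of_deriv_nonpos (convex_Icc 0 1) hcont ?_ ?_
    · rw [interior_Icc]
      exact fun s hs => (hder s hs).2.differentiableAt.differentiableWithinAt
    · rw [interior_Icc]
      intro s hs
      rw [(hder s hs).2.deriv]
      exact hneg s hs
  have hfin := hanti (left_mem_Icc.2 zero_le_one) (right_mem_Icc.2 zero_le_one) zero_le_one
  have hI := hFint 1 (right_mem_Icc.2 zero_le_one)
  simp [hψ, hG] at hfin hI
  refine ⟨hI, hfin.trans (le_of_eq ?_)⟩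
  congr 1; ring

lemma aux_gauss_vec {d : ℕ} (θ K : ℝ) (hθ : 1 ≤ θ) (hK : 0 < K)
    (y a : EuclideanSpace ℝ (Fin d)) :
    ∫⁻ x, ENNReal.ofReal ((K + ‖y + x • a‖ ^ 2) ^ θ) ∂(gaussianReal 0 1)
      ≤ ENNReal.ofReal ((K + ‖y‖ ^ 2 + (2 * θ - 1) * ‖a‖ ^ 2) ^ θ) := by
  by_cases ha : a = 0
  · subst ha; simp
  have hn : 0 < ‖a‖ := norm_pos_iff.2 ha
  set α : ℝ := ⟪y, a⟫ / ‖a‖ with hα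
  have hαa : α * ‖a‖ = ⟪y, a⟫ := by rw [hα]; field_simp
  have hαy : α ^ 2 ≤ ‖y‖ ^ 2 := by
    have h1 : |α| ≤ ‖y‖ := by
      rw [hα, abs_div, abs_norm, div_le_iff₀ hn]
      exact abs_real_inner_le_norm y a
    rw [← sq_abs]
    gcongr
  have key : ∀ x : ℝ, K + ‖y + x • a‖ ^ 2 = (K + ‖y‖ ^ 2 - α ^ 2) + (α + ‖a‖ * x) ^ 2 := by
    intro x
    rw [norm_add_sq_real, inner_smul_right, norm_smul, mul_pow, Real.norm_eq_abs, sq_abs, ← hαa]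
    ring
  have hK' : 0 < K + ‖y‖ ^ 2 - α ^ 2 := by linarith
  obtain ⟨h1, h2⟩ := aux_gauss1 θ _ α ‖a‖ hθ hK'
  simp_rw [key]
  rw [← ofReal_integral_eq_lintegral_ofReal h1
    (Eventually.of_forall fun x => by simp only [Pi.zero_apply]; positivity)]
  refine ENNReal.ofReal_le_ofReal (h2.trans (le_of_eq ?_))
  congr 1; ring

lemma aux_gauss_pi {d : ℕ} (θ : ℝ) (hθ : 1 ≤ θ) (m : ℕ) :
    ∀ (K : ℝ) (_ : 0 < K) (y : EuclideanSpace ℝ (Fin d)) (a : Fin m → EuclideanSpace ℝ (Fin d)),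
    ∫⁻ x, ENNReal.ofReal ((K + ‖y + ∑ j, x j • a j‖ ^ 2) ^ θ)
        ∂(Measure.pi (fun _ : Fin m => gaussianReal 0 1))
      ≤ ENNReal.ofReal ((K + ‖y‖ ^ 2 + (2 * θ - 1) * ∑ j, ‖a j‖ ^ 2) ^ θ) := by
  induction m with
  | zero => intro K hK y a; simp
  | succ m ih =>
    intro K hK y a
    have mp := (measurePreserving_piFinSuccAbove
      (fun _ : Fin (m + 1) => gaussianReal 0 1) 0).symm
    have hS : 0 ≤ (2 * θ - 1) * ∑ j : Fin m, ‖a j.succ‖ ^ 2 :=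
      mul_nonneg (by linarith) (Finset.sum_nonneg fun _ _ => by positivity)
    rw [← mp.lintegral_comp_emb (MeasurableEquiv.measurableEmbedding _)]
    rw [lintegral_prod _ (by fun_prop)]
    calc _ = ∫⁻ u, ∫⁻ v, ENNReal.ofReal ((K + ‖(y + u • a 0) + ∑ j : Fin m, v j • a j.succ‖ ^ 2) ^ θ)
          ∂(Measure.pi (fun _ : Fin m => gaussianReal 0 1)) ∂(gaussianReal 0 1) := by
          simp [Fin.sum_univ_succ, MeasurableEquiv.piFinSuccAbove, add_assoc]
      _ ≤ ∫⁻ u, ENNReal.ofReal (((K + (2 * θ - 1) * ∑ j : Fin m, ‖a j.succ‖ ^ 2) +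
            ‖y + u • a 0‖ ^ 2) ^ θ) ∂(gaussianReal 0 1) := by
          refine lintegral_mono fun u => ?_
          refine (ih K hK (y + u • a 0) (fun j => a j.succ)).trans (le_of_eq ?_)
          congr 2; ring
      _ ≤ _ := by
          refine (aux_gauss_vec θ _ hθ (by linarith) y (a 0)).trans (le_of_eq ?_)
          rw [Fin.sum_univ_succ]
          congr 2; ring

lemma aux_law {m : ℕ} (h : ℝ) (hh : 0 ≤ h) (μ : Measure (EuclideanSpace ℝ (Fin m)))
    [IsProbabilityMeasure μ]
    (hμ : ∀ l : EuclideanSpace ℝ (Fin m), Measure.map (fun w => ⟪l, w⟫) μ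
        = gaussianReal 0 (Real.toNNReal (h * ‖l‖ ^ 2))) :
    μ = (Measure.pi (fun _ : Fin m => gaussianReal 0 1)).map
      (fun x => √h • (WithLp.toLp 2 x : EuclideanSpace ℝ (Fin m))) := by
  have e : (Measure.pi (fun _ : Fin m => gaussianReal 0 1)).map
      (fun x => √h • (WithLp.toLp 2 x : EuclideanSpace ℝ (Fin m)))
      = (stdGaussian (EuclideanSpace ℝ (Fin m))).map (fun x => √h • x) := by
    rw [← map_pi_eq_stdGaussian, Measure.map_map (by fun_prop) (by fun_prop)]
    rfl
  rw [e]
  have : IsProbabilityMeasure ((stdGaussian (EuclideanSpace ℝ (Fin m))).map (fun x => √h • x)) :=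
    Measure.isProbabilityMeasure_map (by fun_prop)
  apply Measure.ext_of_charFun
  ext t
  have h1 : charFun μ t = charFun (Measure.map (fun w => ⟪t, w⟫) μ) 1 := by
    rw [charFun_apply, charFun_apply, integral_map (by fun_prop) (by fun_prop)]
    simp [real_inner_comm]
  have hN : ‖√h • t‖ ^ 2 = h * ‖t‖ ^ 2 := by
    rw [norm_smul, mul_pow, Real.norm_eq_abs, sq_abs, Real.sq_sqrt hh]
  rw [h1, hμ, charFun_gaussianReal, charFun_map_smul, charFun_stdGaussian,
    ← Complex.ofReal_pow ‖√h • t‖, hN, Real.coe_toNNReal _ (by positivity)]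
  congr 1
  push_cast
  ring

lemma aux_frob {d m : ℕ} (A : Matrix (Fin d) (Fin m) ℝ) :
    ‖A‖ ^ 2 = ∑ j, ‖(WithLp.toLp 2 (fun i => A i j) : EuclideanSpace ℝ (Fin d))‖ ^ 2 := by
  rw [Matrix.frobenius_norm_def]
  simp_rw [EuclideanSpace.norm_sq_eq]
  rw [← Real.rpow_natCast, ← Real.rpow_mul (by positivity)]
  norm_num
  rw [Finset.sum_comm]

lemma aux_matMulVec {d m : ℕ} (A : Matrix (Fin d) (Fin m) ℝ) (w : EuclideanSpace ℝ (Fin m)) :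
    matMulVec A w = ∑ j, w j • (WithLp.toLp 2 (fun i => A i j) : EuclideanSpace ℝ (Fin d)) := by
  ext i
  simp [matMulVec, Matrix.mulVec, dotProduct, mul_comm]

lemma aux_gauss_mat {d m : ℕ} (θ : ℝ) (hθ : 1 ≤ θ) (h : ℝ) (hh : 0 ≤ h)
    (μ : Measure (EuclideanSpace ℝ (Fin m))) [IsProbabilityMeasure μ]
    (hμ : ∀ l : EuclideanSpace ℝ (Fin m), Measure.map (fun w => ⟪l, w⟫) μ
        = gaussianReal 0 (Real.toNNReal (h * ‖l‖ ^ 2)))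
    (y : EuclideanSpace ℝ (Fin d)) (A : Matrix (Fin d) (Fin m) ℝ) :
    ∫⁻ w, ENNReal.ofReal ((1 + ‖y + matMulVec A w‖ ^ 2) ^ θ) ∂μ
      ≤ ENNReal.ofReal ((1 + ‖y‖ ^ 2 + (2 * θ - 1) * (h * ‖A‖ ^ 2)) ^ θ) := by
  rw [aux_law h hh μ hμ]
  simp_rw [aux_matMulVec]
  rw [lintegral_map (by fun_prop) (by fun_prop)]
  have := aux_gauss_pi θ hθ m 1 one_pos y
    (fun j => √h • (WithLp.toLp 2 (fun i => A i j) : EuclideanSpace ℝ (Fin d)))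
  convert this using 1
  · congr 1; ext x
    simp [smul_smul, mul_comm]
  · rw [aux_frob, Finset.mul_sum]
    simp_rw [norm_smul, mul_pow, Real.norm_eq_abs, sq_abs, Real.sq_sqrt hh]

lemma aux_jensen {α : Type*} [MeasurableSpace α] (μ : Measure α) [IsProbabilityMeasure μ]
    (f : α → ℝ) (hf : Measurable f) (hf0 : ∀ x, 0 ≤ f x) (B θ q : ℝ) (hB : 0 ≤ B)
    (hq : 0 ≤ q) (hqθ : q ≤ θ)
    (hyp : ∫⁻ x, ENNReal.ofReal (f x ^ θ) ∂μ ≤ ENNReal.ofReal (B ^ θ)) :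
    ∫⁻ x, ENNReal.ofReal (f x ^ q) ∂μ ≤ ENNReal.ofReal (B ^ q) := by
  rcases hq.eq_or_lt with rfl | hq0
  · simp
  have hθ0 : 0 < θ := by linarith
  have h1 := eLpNorm'_le_eLpNorm'_of_exponent_le (f := f) hq0 hqθ μ hf.aestronglyMeasurable
  have e : ∀ r : ℝ, 0 < r → ∀ x, ‖f x‖ₑ ^ r = ENNReal.ofReal (f x ^ r) := by
    intro r hr x
    rw [Real.enorm_eq_ofReal (hf0 x), ENNReal.ofReal_rpow_of_nonneg (hf0 x) hr.le]
  simp only [eLpNorm'] at h1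
  simp_rw [e q hq0, e θ hθ0] at h1
  have h2 : (∫⁻ x, ENNReal.ofReal (f x ^ q) ∂μ) ^ (1 / q) ≤ ENNReal.ofReal B := by
    refine h1.trans ?_
    calc _ ≤ (ENNReal.ofReal (B ^ θ)) ^ (1 / θ) := by gcongr
      _ = _ := by
        rw [← ENNReal.ofReal_rpow_of_nonneg hB hθ0.le, ← ENNReal.rpow_mul,
          mul_one_div_cancel hθ0.ne', ENNReal.rpow_one]
  have h3 := ENNReal.rpow_le_rpow h2 hq
  rw [← ENNReal.rpow_mul, one_div_mul_cancel hq0.ne', ENNReal.rpow_one,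
    ENNReal.ofReal_rpow_of_nonneg hB hq] at h3
  exact h3

lemma aux_meas_step {d m : ℕ} (σ : EuclideanSpace ℝ (Fin d) → Matrix (Fin d) (Fin m) ℝ)
    (hσmeas : ∀ i j, Measurable (fun x => σ x i j)) :
    Measurable (fun z : EuclideanSpace ℝ (Fin d) × EuclideanSpace ℝ (Fin m) =>
      z.1 + matMulVec (σ z.1) z.2) := by
  have h1 : ∀ j, Measurable (fun x : EuclideanSpace ℝ (Fin d) =>
      (WithLp.toLp 2 (fun i => σ x i j) : EuclideanSpace ℝ (Fin d))) := by
    intro j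
    have : Measurable (fun x => (fun i => σ x i j)) := measurable_pi_lambda _ fun i => hσmeas i j
    fun_prop
  simp_rw [aux_matMulVec]
  fun_prop

lemma aux_expansive {d : ℕ} (O : Set (EuclideanSpace ℝ (Fin d)))
    (b : EuclideanSpace ℝ (Fin d) → EuclideanSpace ℝ (Fin d)) (c h : ℝ) (hh : 0 ≤ h)
    (hmono : ∀ x ∈ O, ∀ y ∈ O, ⟪x - y, b x - b y⟫ ≤ c * ‖x - y‖ ^ 2)
    (x : EuclideanSpace ℝ (Fin d)) (hx : x ∈ O) (y : EuclideanSpace ℝ (Fin d)) (hy : y ∈ O) :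
    (1 - h * c) * ‖x - y‖ ≤ ‖(x - h • b x) - (y - h • b y)‖ := by
  have h1 := hmono x hx y hy
  have h2 : ⟪x - y, (x - h • b x) - (y - h • b y)⟫ = ‖x - y‖ ^ 2 - h * ⟪x - y, b x - b y⟫ := by
    have : (x - h • b x) - (y - h • b y) = (x - y) - h • (b x - b y) := by
      rw [smul_sub]; abel
    rw [this, inner_sub_right, real_inner_self_eq_norm_sq, inner_smul_right]
  have h3 := real_inner_le_norm (x - y) ((x - h • b x) - (y - h • b y))
  rcases (norm_nonneg (x - y)).eq_or_lt with h0 | h0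
  · rw [← h0]; simp
  · have h4 := mul_le_mul_of_nonneg_left h1 hh
    refine le_of_mul_le_mul_left ?_ h0
    nlinarith

lemma aux_conv {d : ℕ} (O : Set (EuclideanSpace ℝ (Fin d)))
    (b : EuclideanSpace ℝ (Fin d) → EuclideanSpace ℝ (Fin d)) (c h T : ℝ) (hh : 0 ≤ h)
    (hhT : h ≤ T) (hhc : h * (4 * c) ≤ 1)
    (hmono : ∀ x ∈ O, ∀ y ∈ O, ⟪x - y, b x - b y⟫ ≤ c * ‖x - y‖ ^ 2)
    (y0 : EuclideanSpace ℝ (Fin d)) (hy0 : y0 ∈ O)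
    (y : EuclideanSpace ℝ (Fin d)) (hy : y ∈ O) :
    1 + ‖y‖ ^ 2 ≤ (8 + 18 * (‖y0‖ + T * ‖b y0‖) ^ 2) * (1 + ‖y - h • b y‖ ^ 2) := by
  have h1 := aux_expansive O b c h hh hmono y hy y0 hy0
  set r := ‖y0‖ + T * ‖b y0‖ with hr
  have h2 : ‖y0 - h • b y0‖ ≤ r := by
    refine (norm_sub_le _ _).trans ?_
    rw [norm_smul, Real.norm_of_nonneg hh, hr]
    gcongr
  have h3 : ‖(y - h • b y) - (y0 - h • b y0)‖ ≤ ‖y - h • b y‖ + r :=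
    (norm_sub_le _ _).trans (by gcongr)
  have h4 : ‖y‖ ≤ ‖y - y0‖ + ‖y0‖ := by
    have := norm_add_le (y - y0) y0
    simpa using this
  have h5 : ‖y0‖ ≤ r := by
    have : 0 ≤ T * ‖b y0‖ := mul_nonneg (hh.trans hhT) (norm_nonneg _)
    linarith
  have h6 : 3 / 4 * ‖y - y0‖ ≤ ‖y - h • b y‖ + r := by
    refine le_trans ?_ (h1.trans h3)
    exact mul_le_mul_of_nonneg_right (by linarith) (norm_nonneg _)
  have hz := norm_nonneg (y - h • b y)
  have hy' := norm_nonneg y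
  have h7 : ‖y‖ ≤ 2 * ‖y - h • b y‖ + 3 * r := by linarith [norm_nonneg y0]
  have hr0 : 0 ≤ r := (norm_nonneg y0).trans h5
  have h8 : ‖y‖ ^ 2 ≤ (2 * ‖y - h • b y‖ + 3 * r) ^ 2 := by gcongr
  nlinarith [sq_nonneg (2 * ‖y - h • b y‖ - 3 * r), mul_nonneg (sq_nonneg r) (sq_nonneg ‖y - h • b y‖)]

lemma aux_one_step {Ω : Type*} [MeasurableSpace Ω] (P : Measure Ω) [IsProbabilityMeasure P]
    {d m : ℕ} (ct p h q C : ℝ) (hct : 0 ≤ ct) (hp : 2 ≤ p) (hh : 0 ≤ h) (hq : 0 ≤ q)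
    (hqp : q ≤ p / 2) (hC : 0 ≤ C)
    (O : Set (EuclideanSpace ℝ (Fin d)))
    (b : EuclideanSpace ℝ (Fin d) → EuclideanSpace ℝ (Fin d))
    (σ : EuclideanSpace ℝ (Fin d) → Matrix (Fin d) (Fin m) ℝ)
    (hσmeas : ∀ i j, Measurable (fun x => σ x i j))
    (hcoerc : ∀ x ∈ O, ⟪x, b x⟫ + (p - 1) / 2 * ‖σ x‖ ^ 2 ≤ ct * (1 + ‖x‖ ^ 2))
    (hconv : ∀ y ∈ O, 1 + ‖y‖ ^ 2 ≤ C * (1 + ‖y - h • b y‖ ^ 2))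
    (y : Ω → EuclideanSpace ℝ (Fin d)) (hy : Measurable y) (hyO : ∀ ω, y ω ∈ O)
    (w : Ω → EuclideanSpace ℝ (Fin m)) (hw : Measurable w)
    (hlaw : ∀ l : EuclideanSpace ℝ (Fin m),
      Measure.map (fun ω => ⟪l, w ω⟫) P = gaussianReal 0 (Real.toNNReal (h * ‖l‖ ^ 2)))
    (hind : IndepFun y w P) :
    ∫⁻ ω, ENNReal.ofReal ((1 + ‖y ω + matMulVec (σ (y ω)) (w ω)‖ ^ 2) ^ q) ∂P
      ≤ ENNReal.ofReal (Real.exp (p * ct * C * h)) *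
        ∫⁻ ω, ENNReal.ofReal ((1 + ‖y ω - h • b (y ω)‖ ^ 2) ^ q) ∂P := by
  have hms := aux_meas_step σ hσmeas
  have hprod := hind.map_prod_eq_prod_map_map hy.aemeasurable hw.aemeasurable
  have : IsProbabilityMeasure (P.map w) := Measure.isProbabilityMeasure_map hw.aemeasurable
  have : IsProbabilityMeasure (P.map y) := Measure.isProbabilityMeasure_map hy.aemeasurable
  have hg : Measurable (fun z : EuclideanSpace ℝ (Fin d) × EuclideanSpace ℝ (Fin m) =>
      ENNReal.ofReal ((1 + ‖z.1 + matMulVec (σ z.1) z.2‖ ^ 2) ^ q)) := by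
    fun_prop
  have e1 : ∫⁻ ω, ENNReal.ofReal ((1 + ‖y ω + matMulVec (σ (y ω)) (w ω)‖ ^ 2) ^ q) ∂P
      = ∫⁻ ω, ∫⁻ v, ENNReal.ofReal ((1 + ‖y ω + matMulVec (σ (y ω)) v‖ ^ 2) ^ q) ∂(P.map w) ∂P := by
    rw [← lintegral_map (f := fun z : EuclideanSpace ℝ (Fin d) × EuclideanSpace ℝ (Fin m) =>
      ENNReal.ofReal ((1 + ‖z.1 + matMulVec (σ z.1) z.2‖ ^ 2) ^ q)) hg (hy.prodMk hw), hprod,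
      lintegral_prod _ hg.aemeasurable, lintegral_map hg.lintegral_prod_right' hy]
  rw [e1, ← lintegral_const_mul' _ _ ENNReal.ofReal_ne_top]
  refine lintegral_mono fun ω => ?_
  have hyω := hyO ω
  generalize y ω = x at hyω
  have hlaw' : ∀ l : EuclideanSpace ℝ (Fin m), Measure.map (fun v => ⟪l, v⟫) (P.map w)
        = gaussianReal 0 (Real.toNNReal (h * ‖l‖ ^ 2)) := by
    intro l
    rw [Measure.map_map (by fun_prop) hw, ← hlaw l]
    rfl
  have hs : 0 ≤ (2 * (p / 2) - 1) * (h * ‖σ x‖ ^ 2) :=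
    mul_nonneg (by linarith) (mul_nonneg hh (sq_nonneg _))
  have h1 := aux_gauss_mat (p / 2) (by linarith) h hh (P.map w) hlaw' x (σ x)
  have h2 := aux_jensen (P.map w) (fun v => 1 + ‖x + matMulVec (σ x) v‖ ^ 2)
    (by simp_rw [aux_matMulVec]; fun_prop) (fun v => by positivity) _ (p / 2) q
    (by nlinarith [sq_nonneg ‖x‖]) hq hqp h1
  refine h2.trans ?_
  rw [← ENNReal.ofReal_mul (Real.exp_pos _).le]
  refine ENNReal.ofReal_le_ofReal ?_
  set Z : ℝ := 1 + ‖x - h • b x‖ ^ 2 with hZ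
  have hZ0 : 0 < Z := by positivity
  have hexp : ‖x - h • b x‖ ^ 2 = ‖x‖ ^ 2 - 2 * (h * ⟪x, b x⟫) + h ^ 2 * ‖b x‖ ^ 2 := by
    rw [norm_sub_sq_real, inner_smul_right, norm_smul, mul_pow, Real.norm_eq_abs, sq_abs]
  have h3 : 1 + ‖x‖ ^ 2 + (2 * (p / 2) - 1) * (h * ‖σ x‖ ^ 2) ≤ Real.exp (2 * ct * C * h) * Z := by
    have h4 := mul_le_mul_of_nonneg_left (hcoerc x hyω) hh
    have h5 := mul_le_mul_of_nonneg_left (hconv x hyω) (mul_nonneg hh hct)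
    have h6 := mul_nonneg (sq_nonneg h) (sq_nonneg ‖b x‖)
    have h7 := mul_le_mul_of_nonneg_right (Real.add_one_le_exp (2 * ct * C * h)) hZ0.le
    refine le_trans ?_ h7
    nlinarith
  calc _ ≤ (Real.exp (2 * ct * C * h) * Z) ^ q :=
        Real.rpow_le_rpow (by nlinarith [sq_nonneg ‖x‖]) h3 hq
    _ = Real.exp (2 * ct * C * h * q) * Z ^ q := by
        rw [Real.mul_rpow (Real.exp_pos _).le hZ0.le, ← Real.exp_mul]
    _ ≤ _ := by
        refine mul_le_mul_of_nonneg_right (Real.exp_le_exp.2 ?_) (Real.rpow_nonneg hZ0.le _)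
        have := mul_nonneg (mul_nonneg hct hC) hh
        nlinarith

lemma aux_absorb {Ω : Type*} [MeasurableSpace Ω] (P : Measure Ω) [IsProbabilityMeasure P]
    (p q T : ℝ) (hp : 2 ≤ p) (hT : 0 ≤ T) (hq : 0 ≤ q) (hqp : q ≤ p / 2)
    (A B : Ω → ℝ) (hA : Measurable A) (hB : Measurable B) (hA0 : ∀ ω, 0 ≤ A ω) (hB0 : ∀ ω, 0 ≤ B ω) :
    ∫⁻ ω, ENNReal.ofReal ((1 + (A ω + T * B ω) ^ 2) ^ q) ∂P
      ≤ (ENNReal.ofReal (4 ^ (p / 2)) + ENNReal.ofReal ((1 + 4 * T ^ 2) ^ (p / 2)) *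
          (1 + ∫⁻ ω, ENNReal.ofReal (B ω ^ p) ∂P)) *
        ∫⁻ ω, ENNReal.ofReal ((1 + A ω ^ 2) ^ q) ∂P := by
  set I := ∫⁻ ω, ENNReal.ofReal ((1 + A ω ^ 2) ^ q) ∂P with hI
  have hI1 : 1 ≤ I := by
    have : ∫⁻ ω, (1 : ℝ≥0∞) ∂P ≤ I := by
      refine lintegral_mono fun ω => ?_
      rw [← ENNReal.ofReal_one]
      refine ENNReal.ofReal_le_ofReal (Real.one_le_rpow ?_ hq)
      nlinarith [sq_nonneg (A ω)]
    simpa using this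
  have hpt : ∀ ω, ENNReal.ofReal ((1 + (A ω + T * B ω) ^ 2) ^ q)
      ≤ ENNReal.ofReal (4 ^ (p / 2)) * ENNReal.ofReal ((1 + A ω ^ 2) ^ q)
        + ENNReal.ofReal ((1 + 4 * T ^ 2) ^ (p / 2)) * (1 + ENNReal.ofReal (B ω ^ p)) := by
    intro ω
    have hBp : 0 ≤ B ω ^ p := Real.rpow_nonneg (hB0 ω) _
    rw [← ENNReal.ofReal_one, ← ENNReal.ofReal_add zero_le_one hBp,
      ← ENNReal.ofReal_mul (by positivity), ← ENNReal.ofReal_mul (by positivity),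
      ← ENNReal.ofReal_add (by positivity) (by positivity)]
    refine ENNReal.ofReal_le_ofReal ?_
    have hb : 0 ≤ B ω := hB0 ω
    have t1 : (4 * (1 + A ω ^ 2)) ^ q ≤ 4 ^ (p / 2) * (1 + A ω ^ 2) ^ q := by
      rw [Real.mul_rpow (by norm_num) (by positivity)]
      gcongr
      norm_num
    have t2 : (4 * T ^ 2 * B ω ^ 2) ^ q ≤ (1 + 4 * T ^ 2) ^ (p / 2) * (1 + B ω ^ p) := by
      rw [Real.mul_rpow (by positivity) (by positivity)]
      have u1 : (4 * T ^ 2) ^ q ≤ (1 + 4 * T ^ 2) ^ (p / 2) :=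
        (Real.rpow_le_rpow (by positivity) (by linarith) hq).trans
          (Real.rpow_le_rpow_of_exponent_le (by nlinarith [sq_nonneg T]) hqp)
      have u2 : (B ω ^ 2) ^ q ≤ 1 + B ω ^ p := by
        rw [← Real.rpow_natCast, ← Real.rpow_mul hb]
        rcases le_total (B ω) 1 with h1 | h1
        · have := Real.rpow_le_one hb h1 (show 0 ≤ ((2 : ℕ) : ℝ) * q by positivity)
          linarith
        · have := Real.rpow_le_rpow_of_exponent_le h1 (show ((2 : ℕ) : ℝ) * q ≤ p by
            push_cast; linarith)
          linarith
      gcongr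
    have hle : 1 + (A ω + T * B ω) ^ 2 ≤ 2 * (1 + A ω ^ 2) + 2 * T ^ 2 * B ω ^ 2 := by
      nlinarith [sq_nonneg (A ω - T * B ω)]
    have n1 : 0 ≤ (4 * (1 + A ω ^ 2)) ^ q := by positivity
    have n2 : 0 ≤ (4 * T ^ 2 * B ω ^ 2) ^ q := by positivity
    rcases le_total (2 * T ^ 2 * B ω ^ 2) (2 * (1 + A ω ^ 2)) with h1 | h1
    · have : (1 + (A ω + T * B ω) ^ 2) ^ q ≤ (4 * (1 + A ω ^ 2)) ^ q :=
        Real.rpow_le_rpow (by positivity) (by linarith) hq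
      linarith
    · have : (1 + (A ω + T * B ω) ^ 2) ^ q ≤ (4 * T ^ 2 * B ω ^ 2) ^ q :=
        Real.rpow_le_rpow (by positivity) (by linarith) hq
      linarith
  calc _ ≤ ∫⁻ ω, (ENNReal.ofReal (4 ^ (p / 2)) * ENNReal.ofReal ((1 + A ω ^ 2) ^ q)
        + ENNReal.ofReal ((1 + 4 * T ^ 2) ^ (p / 2)) * (1 + ENNReal.ofReal (B ω ^ p))) ∂P :=
        lintegral_mono hpt
    _ = ENNReal.ofReal (4 ^ (p / 2)) * I + ENNReal.ofReal ((1 + 4 * T ^ 2) ^ (p / 2)) *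
          (1 + ∫⁻ ω, ENNReal.ofReal (B ω ^ p) ∂P) := by
        rw [lintegral_add_left (by fun_prop), lintegral_const_mul _ (by fun_prop),
          lintegral_const_mul _ (by fun_prop), lintegral_add_left (by fun_prop)]
        simp [hI]
    _ ≤ _ := by
        rw [add_mul]
        exact add_le_add le_rfl (le_mul_of_one_le_right' hI1)

theorem implicit_Euler_existence_uniqueness_and_moment_bounds
    {Ω : Type*} [MeasurableSpace Ω] (P : Measure Ω) [IsProbabilityMeasure P]
    (d m : ℕ) (hd : 0 < d) (hm : 0 < m)
    (cdrift ct T p : ℝ) (hcdrift : 0 ≤ cdrift) (hct : 0 ≤ ct) (hT : 0 ≤ T) (hp : 2 ≤ p)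
    (O : Set (EuclideanSpace ℝ (Fin d))) (hO : MeasurableSet O)
    (b : EuclideanSpace ℝ (Fin d) → EuclideanSpace ℝ (Fin d)) (hbmeas : Measurable b)
    (σ : EuclideanSpace ℝ (Fin d) → Matrix (Fin d) (Fin m) ℝ)
    (hσmeas : ∀ i j, Measurable (fun x => σ x i j))
    (F : ℝ → MeasurableSpace Ω)
    (hF_mono : ∀ s u : ℝ, s ≤ u → F s ≤ F u)
    (hF_le : ∀ u : ℝ, F u ≤ (inferInstance : MeasurableSpace Ω))
    (W : ℝ → Ω → EuclideanSpace ℝ (Fin m))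
    (hW0 : ∀ ω, W 0 ω = 0)
    (hWadapt : ∀ u ∈ Set.Icc (0:ℝ) T, @Measurable Ω _ (F u) _ (W u))
    (hWcont : ∀ ω, ContinuousOn (fun u => W u ω) (Set.Icc 0 T))
    (hWlaw : ∀ s u : ℝ, 0 ≤ s → s ≤ u → u ≤ T → ∀ l : EuclideanSpace ℝ (Fin m),
      Measure.map (fun ω => ⟪l, W u ω - W s ω⟫) P
        = gaussianReal 0 (Real.toNNReal ((u - s) * ‖l‖ ^ 2)))
    (hWindep : ∀ s u : ℝ, 0 ≤ s → s ≤ u → u ≤ T →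
      Indep (MeasurableSpace.comap (fun ω => W u ω - W s ω) inferInstance) (F s) P)
    (ξ : Ω → EuclideanSpace ℝ (Fin d))
    (hξmeas : @Measurable Ω _ (F 0) _ ξ) (hξO : ∀ ω, ξ ω ∈ O)
    (hξmom : ∫⁻ ω, ENNReal.ofReal (‖b (ξ ω)‖ ^ p) ∂P < ⊤)
    (hmono : ∀ x ∈ O, ∀ y ∈ O, ⟪x - y, b x - b y⟫ ≤ cdrift * ‖x - y‖ ^ 2)
    (hcoerc : ∀ x ∈ O, ⟪x, b x⟫ + (p - 1) / 2 * ‖σ x‖ ^ 2 ≤ ct * (1 + ‖x‖ ^ 2))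
    (hsurj : ∀ s : ℝ, 0 < s → s * cdrift < 1 →
      Set.SurjOn (fun x => x - s • b x) O Set.univ) :
    ∃ Y : ℝ → ℕ → Ω → EuclideanSpace ℝ (Fin d),
      ImplicitEulerScheme d m T cdrift O b σ ξ W Y ∧
      (∀ Y' : ℝ → ℕ → Ω → EuclideanSpace ℝ (Fin d),
        ImplicitEulerScheme d m T cdrift O b σ ξ W Y' →
        ∀ h : ℝ, h ∈ Set.Ioc (0:ℝ) T → h * cdrift < 1 →
          ∀ n : ℕ, (n : ℝ) ≤ T / h → ∀ ω, Y' h n ω = Y h n ω) ∧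
      ∃ ρ : ℝ, 0 < ρ ∧ ∀ q : ℝ, 0 ≤ q → q ≤ p / 2 →
        Filter.limsup
            (fun h : ℝ => ⨆ n : ℕ, ⨆ _ : (n : ℝ) ≤ T / h,
              ∫⁻ ω, ENNReal.ofReal ((1 + ‖Y h n ω‖ ^ 2) ^ q) ∂P)
            (nhdsWithin 0 (Set.Ioi 0))
          ≤ ENNReal.ofReal (Real.exp (ρ * T)) *
              ∫⁻ ω, ENNReal.ofReal ((1 + ‖ξ ω‖ ^ 2) ^ q) ∂P
        ∧ (⨆ h : ℝ, ⨆ _ : h ∈ Set.Ioc (0:ℝ) T, ⨆ _ : h * (4 * cdrift) ≤ 1,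
              ⨆ n : ℕ, ⨆ _ : (n : ℝ) ≤ T / h,
                ∫⁻ ω, ENNReal.ofReal ((1 + ‖Y h n ω‖ ^ 2) ^ q) ∂P)
            ≤ ENNReal.ofReal (Real.exp ((4 * cdrift + ρ) * T)) *
                ∫⁻ ω, ENNReal.ofReal ((1 + (‖ξ ω‖ + T * ‖b (ξ ω)‖) ^ 2) ^ q) ∂P := by
  classical
  set Ψ : ℝ → EuclideanSpace ℝ (Fin d) → EuclideanSpace ℝ (Fin d) :=
    fun h => Function.invFunOn (fun x => x - h • b x) O with hΨ
  have hΨ1 : ∀ h : ℝ, 0 < h → h * cdrift < 1 → ∀ z,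
      Ψ h z ∈ O ∧ Ψ h z - h • b (Ψ h z) = z := by
    intro h hh hhc z
    have hex : ∃ a ∈ O, (fun x => x - h • b x) a = z := hsurj h hh hhc (Set.mem_univ z)
    exact ⟨Function.invFunOn_mem hex, Function.invFunOn_eq hex⟩
  have hinj : ∀ h : ℝ, 0 < h → h * cdrift < 1 → ∀ x ∈ O, ∀ y ∈ O,
      x - h • b x = y - h • b y → x = y := by
    intro h hh hhc x hx y hy hxy
    have h1 := aux_expansive O b cdrift h hh.le hmono x hx y hy
    rw [hxy, sub_self, norm_zero] at h1
    have h2 : ‖x - y‖ ≤ 0 := by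
      by_contra hcon
      push Not at hcon
      nlinarith
    exact sub_eq_zero.1 (norm_le_zero_iff.1 h2)
  have hΨm : ∀ h : ℝ, 0 < h → h * cdrift < 1 → Measurable (Ψ h) := by
    intro h hh hhc
    have hpos : 0 < 1 - h * cdrift := by linarith
    have : LipschitzWith (Real.toNNReal (1 - h * cdrift)⁻¹) (Ψ h) := by
      refine LipschitzWith.of_dist_le_mul fun x y => ?_
      have h1 := aux_expansive O b cdrift h hh.le hmono (Ψ h x) (hΨ1 h hh hhc x).1
        (Ψ h y) (hΨ1 h hh hhc y).1
      rw [(hΨ1 h hh hhc x).2, (hΨ1 h hh hhc y).2] at h1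
      rw [Real.coe_toNNReal _ (by positivity), dist_eq_norm, dist_eq_norm, inv_mul_eq_div,
        le_div_iff₀ hpos, mul_comm]
      exact h1
    exact this.continuous.measurable
  set Y : ℝ → ℕ → Ω → EuclideanSpace ℝ (Fin d) := fun h n => Nat.rec ξ
    (fun k Yk ω => Ψ h (Yk ω + matMulVec (σ (Yk ω))
      (W (((k + 1 : ℕ) : ℝ) * h) ω - W ((k : ℝ) * h) ω))) n with hYdef
  have hY0 : ∀ h, Y h 0 = ξ := fun h => rfl
  have hYs : ∀ h k ω, Y h (k + 1) ω = Ψ h (Y h k ω + matMulVec (σ (Y h k ω))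
      (W (((k + 1 : ℕ) : ℝ) * h) ω - W ((k : ℝ) * h) ω)) := fun h k ω => rfl
  have hYO : ∀ h : ℝ, 0 < h → h * cdrift < 1 → ∀ n ω, Y h n ω ∈ O := by
    intro h hh hhc n ω
    cases n with
    | zero => exact hξO ω
    | succ k => rw [hYs]; exact (hΨ1 h hh hhc _).1
  have hYeq : ∀ h : ℝ, 0 < h → h * cdrift < 1 → ∀ k ω,
      Y h (k + 1) ω - h • b (Y h (k + 1) ω) = Y h k ω + matMulVec (σ (Y h k ω))
      (W (((k + 1 : ℕ) : ℝ) * h) ω - W ((k : ℝ) * h) ω) := by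
    intro h hh hhc k ω
    rw [hYs]; exact (hΨ1 h hh hhc _).2
  -- measurability
  have hYm : ∀ h : ℝ, 0 < h → h * cdrift < 1 → ∀ n : ℕ, (n : ℝ) * h ≤ T →
      @Measurable Ω _ (F (n * h)) _ (Y h n) := by
    intro h hh hhc n
    induction n with
    | zero =>
      intro _
      have e : ((0 : ℕ) : ℝ) * h = 0 := by simp
      have e2 : Y h 0 = ξ := by funext ω; first | exact hY0 h ω | rfl | rw [hY0]
      rw [e, e2]
      exact hξmeas
    | succ k ih =>
      intro hk
      have hkk : (k : ℝ) * h ≤ ((k + 1 : ℕ) : ℝ) * h := by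
        push_cast; nlinarith
      have h1 : @Measurable Ω _ (F (((k + 1 : ℕ) : ℝ) * h)) _ (Y h k) :=
        (ih (hkk.trans hk)).mono (hF_mono _ _ hkk) le_rfl
      have h2 : @Measurable Ω _ (F (((k + 1 : ℕ) : ℝ) * h)) _ (W ((k : ℝ) * h)) :=
        (hWadapt _ ⟨by positivity, hkk.trans hk⟩).mono (hF_mono _ _ hkk) le_rfl
      have h3 : @Measurable Ω _ (F (((k + 1 : ℕ) : ℝ) * h)) _ (W (((k + 1 : ℕ) : ℝ) * h)) :=
        hWadapt _ ⟨by positivity, hk⟩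
      exact (hΨm h hh hhc).comp ((aux_meas_step σ hσmeas).comp (h1.prodMk (h3.sub h2)))
  obtain ⟨y0, hy0⟩ : O.Nonempty := by
    haveI : Nonempty Ω := P.nonempty_of_neZero
    exact ⟨ξ (Classical.arbitrary Ω), hξO _⟩
  set C : ℝ := 8 + 18 * (‖y0‖ + T * ‖b y0‖) ^ 2 with hC
  have hC1 : 1 ≤ C := by nlinarith [sq_nonneg (‖y0‖ + T * ‖b y0‖)]
  -- moment recursion
  have hrec : ∀ q : ℝ, 0 ≤ q → q ≤ p / 2 → ∀ h ∈ Set.Ioc (0:ℝ) T, h * (4 * cdrift) ≤ 1 →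
      ∀ n : ℕ, (n : ℝ) * h ≤ T →
      ∫⁻ ω, ENNReal.ofReal ((1 + ‖Y h n ω - h • b (Y h n ω)‖ ^ 2) ^ q) ∂P
        ≤ ENNReal.ofReal (Real.exp (p * ct * C * (n * h))) *
          ∫⁻ ω, ENNReal.ofReal ((1 + ‖ξ ω - h • b (ξ ω)‖ ^ 2) ^ q) ∂P := by
    intro q hq hqp h hhT hhc4 n
    have hh := hhT.1
    have hhc : h * cdrift < 1 := by nlinarith [mul_nonneg hh.le hcdrift]
    induction n with
    | zero => intro _; simp [hY0]
    | succ k ih =>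
      intro hk
      have hkk : (k : ℝ) * h ≤ ((k + 1 : ℕ) : ℝ) * h := by
        push_cast; nlinarith
      have hkT := hkk.trans hk
      have hYkm := hYm h hh hhc k hkT
      have hw : Measurable (fun ω => W (((k + 1 : ℕ) : ℝ) * h) ω - W ((k : ℝ) * h) ω) :=
        ((hWadapt _ ⟨by positivity, hk⟩).mono (hF_le _) le_rfl).sub
          ((hWadapt _ ⟨by positivity, hkT⟩).mono (hF_le _) le_rfl)
      have hind : IndepFun (Y h k)
          (fun ω => W (((k + 1 : ℕ) : ℝ) * h) ω - W ((k : ℝ) * h) ω) P := by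
        have h1 := (hWindep _ _ (by positivity) hkk hk).symm
        rw [IndepFun_iff_Indep]
        exact indep_of_indep_of_le_left h1 hYkm.comap_le
      have hstep := aux_one_step P ct p h q C hct hp hh.le hq hqp (by linarith) O b σ hσmeas hcoerc
        (fun y hy => aux_conv O b cdrift h T hh.le hhT.2 hhc4 hmono y0 hy0 y hy)
        (Y h k) (hYkm.mono (hF_le _) le_rfl) (hYO h hh hhc k) _ hw
        (by
          intro l
          have := hWlaw _ _ (by positivity) hkk hk l
          rw [this]
          congr 3
          push_cast; ring) hind
      simp_rw [hYeq h hh hhc k]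
      refine hstep.trans ?_
      refine (mul_le_mul_right (ih hkT) _).trans (le_of_eq ?_)
      rw [← mul_assoc, ← ENNReal.ofReal_mul (Real.exp_pos _).le, ← Real.exp_add]
      congr 3
      push_cast; ring
  have hmom : ∀ q : ℝ, 0 ≤ q → q ≤ p / 2 → ∀ h ∈ Set.Ioc (0:ℝ) T, h * (4 * cdrift) ≤ 1 →
      ∀ n : ℕ, (n : ℝ) ≤ T / h →
      ∫⁻ ω, ENNReal.ofReal ((1 + ‖Y h n ω‖ ^ 2) ^ q) ∂P
        ≤ ENNReal.ofReal (C ^ (p / 2) * Real.exp (p * ct * C * T)) *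
          ∫⁻ ω, ENNReal.ofReal ((1 + (‖ξ ω‖ + T * ‖b (ξ ω)‖) ^ 2) ^ q) ∂P := by
    intro q hq hqp h hhT hhc4 n hn
    have hh := hhT.1
    have hhc : h * cdrift < 1 := by nlinarith [mul_nonneg hh.le hcdrift]
    have hnT : (n : ℝ) * h ≤ T := (le_div_iff₀ hh).1 hn
    have h1 := hrec q hq hqp h hhT hhc4 n hnT
    have h2 : ∫⁻ ω, ENNReal.ofReal ((1 + ‖Y h n ω‖ ^ 2) ^ q) ∂P
        ≤ ENNReal.ofReal (C ^ (p / 2)) *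
          ∫⁻ ω, ENNReal.ofReal ((1 + ‖Y h n ω - h • b (Y h n ω)‖ ^ 2) ^ q) ∂P := by
      rw [← lintegral_const_mul' _ _ ENNReal.ofReal_ne_top]
      refine lintegral_mono fun ω => ?_
      rw [← ENNReal.ofReal_mul (by positivity)]
      refine ENNReal.ofReal_le_ofReal ?_
      have h3 := aux_conv O b cdrift h T hh.le hhT.2 hhc4 hmono y0 hy0 _ (hYO h hh hhc n ω)
      calc _ ≤ (C * (1 + ‖Y h n ω - h • b (Y h n ω)‖ ^ 2)) ^ q :=
            Real.rpow_le_rpow (by positivity) h3 hq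
        _ = C ^ q * (1 + ‖Y h n ω - h • b (Y h n ω)‖ ^ 2) ^ q :=
            Real.mul_rpow (by linarith) (by positivity)
        _ ≤ _ := by
            refine mul_le_mul_of_nonneg_right ?_ (by positivity)
            exact Real.rpow_le_rpow_of_exponent_le hC1 hqp
    have h4 : ∫⁻ ω, ENNReal.ofReal ((1 + ‖ξ ω - h • b (ξ ω)‖ ^ 2) ^ q) ∂P
        ≤ ∫⁻ ω, ENNReal.ofReal ((1 + (‖ξ ω‖ + T * ‖b (ξ ω)‖) ^ 2) ^ q) ∂P := by
      refine lintegral_mono fun ω => ENNReal.ofReal_le_ofReal ?_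
      refine Real.rpow_le_rpow (by positivity) ?_ hq
      have h5 : ‖ξ ω - h • b (ξ ω)‖ ≤ ‖ξ ω‖ + T * ‖b (ξ ω)‖ := by
        refine (norm_sub_le _ _).trans ?_
        rw [norm_smul, Real.norm_of_nonneg hh.le]
        have := hhT.2
        gcongr
      gcongr
    have h6 : Real.exp (p * ct * C * (n * h)) ≤ Real.exp (p * ct * C * T) := by
      refine Real.exp_le_exp.2 ?_
      exact mul_le_mul_of_nonneg_left hnT (by positivity)
    rw [ENNReal.ofReal_mul (by positivity), mul_assoc]
    refine h2.trans (mul_le_mul_right (h1.trans ?_) _)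
    exact mul_le_mul' (ENNReal.ofReal_le_ofReal h6) h4
  set M : ℝ := (∫⁻ ω, ENNReal.ofReal (‖b (ξ ω)‖ ^ p) ∂P).toReal with hM
  have hM' : ENNReal.ofReal M = ∫⁻ ω, ENNReal.ofReal (‖b (ξ ω)‖ ^ p) ∂P :=
    ENNReal.ofReal_toReal hξmom.ne
  have hM0 : 0 ≤ M := ENNReal.toReal_nonneg
  set D : ℝ := 4 ^ (p / 2) + (1 + 4 * T ^ 2) ^ (p / 2) * (1 + M) with hD
  have hξm : Measurable ξ := hξmeas.mono (hF_le _) le_rfl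
  have hD1 : 1 ≤ D := by
    have h1 : (1:ℝ) ≤ 4 ^ (p / 2) := Real.one_le_rpow (by norm_num) (by linarith)
    have h2 : 0 ≤ (1 + 4 * T ^ 2) ^ (p / 2) * (1 + M) := by positivity
    linarith
  have habs : ∀ q : ℝ, 0 ≤ q → q ≤ p / 2 →
      ∫⁻ ω, ENNReal.ofReal ((1 + (‖ξ ω‖ + T * ‖b (ξ ω)‖) ^ 2) ^ q) ∂P
        ≤ ENNReal.ofReal D * ∫⁻ ω, ENNReal.ofReal ((1 + ‖ξ ω‖ ^ 2) ^ q) ∂P := by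
    intro q hq hqp
    have := aux_absorb P p q T hp hT hq hqp (fun ω => ‖ξ ω‖) (fun ω => ‖b (ξ ω)‖)
      (by fun_prop) (by fun_prop) (fun _ => norm_nonneg _) (fun _ => norm_nonneg _)
    rwa [← hM', ← ENNReal.ofReal_one, ← ENNReal.ofReal_add zero_le_one hM0,
      ← ENNReal.ofReal_mul (by positivity), ← ENNReal.ofReal_add (by positivity) (by positivity)]
      at this
  set K : ℝ := C ^ (p / 2) * Real.exp (p * ct * C * T) with hK
  have hK0 : 0 < K := by positivity
  have hD0 : 0 < D := by linarith
  refine ⟨Y, ?_, ?_, 1 + |Real.log (K * D)| / T, by positivity, ?_⟩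
  · intro h hhT hhc
    refine ⟨fun ω => rfl, ?_⟩
    intro n hn _ ω
    obtain ⟨k, rfl⟩ : ∃ k, n = k + 1 := ⟨n - 1, by omega⟩
    refine ⟨hYO h hhT.1 hhc (k + 1) ω, ?_⟩
    have := hYeq h hhT.1 hhc k ω
    rw [Nat.add_sub_cancel, add_right_comm, ← this]
    abel
  · intro Y' hY' h hhT hhc n
    obtain ⟨h0, hs⟩ := hY' h hhT hhc
    induction n with
    | zero => intro _ ω; rw [h0 ω, hY0]
    | succ k ih =>
      intro hk ω
      have hk' : (k : ℝ) ≤ T / h := le_trans (by push_cast; linarith) hk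
      obtain ⟨h1, h2⟩ := hs (k + 1) (by omega) hk ω
      refine hinj h hhT.1 hhc _ h1 _ (hYO h hhT.1 hhc (k + 1) ω) ?_
      rw [hYeq h hhT.1 hhc k ω]
      rw [Nat.add_sub_cancel, ih hk' ω] at h2
      rw [sub_eq_iff_eq_add]
      rw [add_right_comm] at h2
      exact h2
  · intro q hq hqp
    rcases hT.eq_or_lt with hT0 | hTpos
    · refine ⟨?_, ?_⟩
      · refine limsup_le_of_le (by isBoundedDefault) (Eventually.of_forall fun h => ?_)
        refine iSup₂_le fun n hn => ?_
        rw [← hT0, zero_div] at hn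
        have hn0 : n = 0 := by exact_mod_cast le_antisymm hn (Nat.cast_nonneg n)
        subst hn0
        rw [hY0, ← hT0]
        simp
      · refine iSup_le fun h => iSup_le fun hh => ?_
        exact absurd (hh.1.trans_le hh.2) (by rw [← hT0]; exact lt_irrefl _)
    have hexpo : K * D ≤ Real.exp ((1 + |Real.log (K * D)| / T) * T) := by
      have h1 : (1 + |Real.log (K * D)| / T) * T = T + |Real.log (K * D)| := by
        field_simp
      rw [h1, ← Real.exp_log (mul_pos hK0 hD0)]
      refine Real.exp_le_exp.2 ?_
      rw [Real.exp_log (mul_pos hK0 hD0)]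
      linarith [le_abs_self (Real.log (K * D))]
    refine ⟨?_, ?_⟩
    · refine limsup_le_of_le (by isBoundedDefault) ?_
      have hδ : 0 < min T (1 / (4 * cdrift + 1)) := by positivity
      filter_upwards [Ioo_mem_nhdsGT hδ] with h hh
      have hhT : h ∈ Set.Ioc (0:ℝ) T := ⟨hh.1, (hh.2.le).trans (min_le_left _ _)⟩
      have hh4 : h * (4 * cdrift) ≤ 1 := by
        have h1 := hh.2.le.trans (min_le_right _ _)
        rw [le_div_iff₀ (by positivity)] at h1
        linarith [hh.1]
      refine iSup₂_le fun n hn => ?_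
      refine (hmom q hq hqp h hhT hh4 n hn).trans ?_
      refine (mul_le_mul_right (habs q hq hqp) _).trans ?_
      rw [← mul_assoc, ← ENNReal.ofReal_mul hK0.le]
      exact mul_le_mul_left (ENNReal.ofReal_le_ofReal hexpo) _
    · refine iSup_le fun h => iSup_le fun hhT => iSup_le fun hh4 => iSup₂_le fun n hn => ?_
      refine (hmom q hq hqp h hhT hh4 n hn).trans ?_
      refine mul_le_mul_left (ENNReal.ofReal_le_ofReal ?_) _
      refine le_trans ?_ (hexpo.trans (Real.exp_le_exp.2 ?_))
      · exact le_mul_of_one_le_right hK0.le hD1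
      · exact mul_le_mul_of_nonneg_right (by linarith) hT

end
end

section
/- Let d, m ∈ ℕ, n ∈ ℕ₀, T, c ∈ [0,∞), let θ = (t₀,…,t_n) ∈ [0,T]^{n+1} satisfy 0 = t₀ < t₁ < … < t_n = T and 4c|θ| ≤ 1, where |θ| := max_{k}(t_k − t_{k−1}), let O ⊆ ℝ^d be Borel, let μ : O → ℝ^d and σ : O → ℝ^{d×m} be Borel measurable with ⟨x, μ(x)⟩ ≤ c(1+‖x‖²) for all x ∈ O, let (Ω, 𝓕, ℙ, (𝓕_t)_{t∈[0,T]}) be a filtered probability space, let W : [0,T]×Ω → ℝ^m be a standard (𝓕_t)-Brownian motion, and let Y : {t₀,…,t_n}×Ω → O be such that each Y_{t_k} is 𝓕_{t_k}-measurable and Y_{t_{k+1}} = Y_{t_k} + μ(Y_{t_{k+1}})·(t_{k+1}−t_k) + σ(Y_{t_k})(W_{t_{k+1}} − W_{t_k}) ℙ-a.s. for all k ∈ {0,…,n−1}. Then for all k ∈ {0,…,n} and p ∈ [2,∞): ‖ sup_{i∈{0,…,k}} (1+‖Y_{t_i}‖²) ‖_{L^p(Ω;ℝ)} ≤ e^{4c·t_k}·(1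 + ‖Y₀‖_{L^{2p}(Ω;ℝ^d)}²) + ( (2p³/(p−1)) Σ_{i=0}^{k−1} e^{8c(t_k−t_i)} ‖ σ(Y_{t_i})^* Y_{t_i} ‖_{L^p(Ω;ℝ^m)}² (t_{i+1}−t_i) )^{1/2} + p(2p−1) Σ_{i=0}^{k−1} e^{4c(t_k−t_i)} ‖ σ(Y_{t_i}) ‖_{L^{2p}(Ω; HS(ℝ^m,ℝ^d))}² (t_{i+1}−t_i). -/
open MeasureTheory ProbabilityTheory Filter Set
open scoped ENNReal NNReal RealInnerProductSpace

noncomputable section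

attribute [local instance] Matrix.frobeniusSeminormedAddCommGroup
  Matrix.frobeniusNormedAddCommGroup

lemma aux_int_one_add (q : ℝ) (hq : 0 ≤ q) :
    Integrable (fun x : ℝ => (1 + |x|) ^ q) (gaussianReal 0 1) := by
  rcases hq.eq_or_lt with rfl | hq
  · simp
  have h1 : MemLp (fun x : ℝ => 1 + |x|) (ENNReal.ofReal q) (gaussianReal 0 1) := by
    have := memLp_id_gaussianReal' (μ := 0) (v := 1) (ENNReal.ofReal q) (by simp)
    have h2 : MemLp (fun x : ℝ => |x|) (ENNReal.ofReal q) (gaussianReal 0 1) := this.norm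
    exact (memLp_const (1:ℝ)).add h2
  have h2 := h1.integrable_norm_rpow (by simpa using hq) (by simp)
  rw [ENNReal.toReal_ofReal hq.le] at h2
  refine h2.congr (Eventually.of_forall fun x => ?_)
  simp only [Real.norm_eq_abs]
  rw [abs_of_nonneg (by positivity)]

lemma aux_int_dom (q C : ℝ) (hq : 0 ≤ q) (f : ℝ → ℝ) (hf : Measurable f)
    (hb : ∀ x, |f x| ≤ C * (1 + |x|) ^ q) : Integrable f (gaussianReal 0 1) := by
  refine ((aux_int_one_add q hq).const_mul C).mono' hf.aestronglyMeasurable ?_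
  exact Eventually.of_forall fun x => by simpa using hb x

lemma aux_int_pdf (f : ℝ → ℝ) (h : Integrable f (gaussianReal 0 1)) :
    Integrable (fun x => f x * gaussianPDFReal 0 1 x) := by
  rw [gaussianReal_of_var_ne_zero _ (by simp)] at h
  unfold gaussianPDF at h
  rw [integrable_withDensity_iff_integrable_smul₀' (by fun_prop) (by simp)] at h
  refine h.congr (Eventually.of_forall fun x => ?_)
  simp only
  rw [ENNReal.toReal_ofReal (gaussianPDFReal_nonneg _ _ _)]; simp [mul_comm]

lemma aux_pdf_deriv (x : ℝ) :
    HasDerivAt (gaussianPDFReal 0 1) (-x * gaussianPDFReal 0 1 x) x := by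
  unfold gaussianPDFReal
  have h : HasDerivAt (fun x : ℝ => -(x - 0) ^ 2 / (2 * ((1 : ℝ≥0) : ℝ))) (-x) x := by
    have := (((hasDerivAt_id x).sub_const 0).pow 2).neg.div_const (2 * ((1 : ℝ≥0) : ℝ))
    refine this.congr_deriv ?_
    simp
    ring
  refine (h.exp.const_mul _).congr_deriv ?_
  ring

lemma aux_stein_s15 (v v' : ℝ → ℝ) (hd : ∀ x, HasDerivAt v (v' x) x)
    (h1 : Integrable (fun x => x * v x) (gaussianReal 0 1))
    (h2 : Integrable v' (gaussianReal 0 1)) (h3 : Integrable v (gaussianReal 0 1)) :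
    ∫ x, x * v x ∂(gaussianReal 0 1) = ∫ x, v' x ∂(gaussianReal 0 1) := by
  have key := integral_eq_zero_of_hasDerivAt_of_integrable
    (f := fun x => v x * gaussianPDFReal 0 1 x)
    (f' := fun x => v' x * gaussianPDFReal 0 1 x - (x * v x) * gaussianPDFReal 0 1 x)
    (fun x => ((hd x).mul (aux_pdf_deriv x)).congr_deriv (by ring))
    ((aux_int_pdf _ h2).sub (aux_int_pdf _ h1)) (aux_int_pdf _ h3)
  rw [integral_sub (aux_int_pdf _ h2) (aux_int_pdf _ h1)] at key
  rw [integral_gaussianReal_eq_integral_smul (by simp),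
    integral_gaussianReal_eq_integral_smul (by simp)]
  simp only [smul_eq_mul, mul_comm (gaussianPDFReal 0 1 _)]
  linarith

lemma aux_deriv2 (p : ℝ) (hp : 2 ≤ p) (x : ℝ) :
    HasDerivAt (fun x : ℝ => |x| ^ (p - 2) * x) ((p - 1) * |x| ^ (p - 2)) x := by
  rcases hp.eq_or_lt with rfl | hp
  · norm_num
    exact hasDerivAt_id x
  rcases eq_or_ne x 0 with rfl | hx
  · rw [hasDerivAt_iff_tendsto_slope]
    have : Tendsto (fun y : ℝ => |y| ^ (p - 2)) (nhdsWithin 0 {0}ᶜ) (nhds ((p - 1) * |0| ^ (p - 2))) := by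
      have hc : Continuous (fun y : ℝ => |y| ^ (p - 2)) :=
        continuous_abs.rpow_const (fun _ => Or.inr (by linarith))
      have := (hc.tendsto 0).mono_left (nhdsWithin_le_nhds (s := {0}ᶜ))
      simpa [Real.zero_rpow (show p - 2 ≠ 0 by linarith)] using this
    refine this.congr' ?_
    filter_upwards [self_mem_nhdsWithin] with y hy
    have hy : y ≠ 0 := hy
    simp [slope_def_field, hy]
  · have h1 : HasDerivAt (fun x : ℝ => |x|) (SignType.sign x : ℝ) x := hasDerivAt_abs hx
    have h2 := (h1.rpow_const (p := p - 2) (Or.inl (abs_ne_zero.2 hx))).mul (hasDerivAt_id x)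
    refine h2.congr_deriv ?_
    have h3 : (SignType.sign x : ℝ) * x = |x| := sign_mul_self x
    have h4 : |x| ^ (p - 2) = |x| ^ (p - 2 - 1) * |x| := by
      rw [← Real.rpow_add_one (abs_ne_zero.2 hx)]; ring_nf
    simp only [id, mul_one]
    calc _ = (p - 2) * |x| ^ (p - 2 - 1) * ((SignType.sign x : ℝ) * x) + |x| ^ (p - 2) := by ring
      _ = _ := by rw [h3, h4]; ring

lemma aux_lin_bound (a s x : ℝ) (q : ℝ) (hq : 0 ≤ q) :
    |a + s * x| ^ q ≤ (|a| + |s|) ^ q * (1 + |x|) ^ q := by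
  rw [← Real.mul_rpow (by positivity) (by positivity)]
  refine Real.rpow_le_rpow (abs_nonneg _) ?_ hq
  have := abs_add_le a (s * x)
  rw [abs_mul] at this
  nlinarith [mul_nonneg (abs_nonneg a) (abs_nonneg x), abs_nonneg s]

lemma aux_int_lin (a s q : ℝ) (hq : 0 ≤ q) :
    Integrable (fun x => |a + s * x| ^ q) (gaussianReal 0 1) := by
  refine aux_int_dom q ((|a| + |s|) ^ q) hq _ (by fun_prop) fun x => ?_
  rw [abs_of_nonneg (by positivity)]
  exact aux_lin_bound a s x q hq

lemma aux_lin_bound2 (a s x p : ℝ) (hp : 2 ≤ p) :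
    |x * (|a + s * x| ^ (p - 2) * (a + s * x))| ≤ (|a| + |s|) ^ (p - 1) * (1 + |x|) ^ p := by
  have e : |a + s * x| ^ (p - 2) * |a + s * x| = |a + s * x| ^ (p - 1) := by
    rw [show p - 1 = p - 2 + 1 by ring, Real.rpow_add_of_nonneg (abs_nonneg _) (by linarith) (by linarith), Real.rpow_one]
  rw [abs_mul, abs_mul, abs_of_nonneg (show (0:ℝ) ≤ |a + s * x| ^ (p - 2) by positivity), e]
  have h := aux_lin_bound a s x (p - 1) (by linarith)
  have e2 : (1 + |x|) ^ p = (1 + |x|) ^ (p - 1) * (1 + |x|) := by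
    rw [← Real.rpow_add_one (by positivity)]; ring_nf
  rw [e2]
  calc |x| * |a + s * x| ^ (p - 1) ≤ (1 + |x|) * ((|a| + |s|) ^ (p - 1) * (1 + |x|) ^ (p - 1)) := by
        gcongr; linarith
    _ = _ := by ring

lemma aux_f_deriv (p : ℝ) (hp : 2 ≤ p) (a s : ℝ) :
    HasDerivAt (fun s => ∫ x, |a + s * x| ^ p ∂(gaussianReal 0 1))
      (p * (p - 1) * s * ∫ x, |a + s * x| ^ (p - 2) ∂(gaussianReal 0 1)) s := by
  have hin : ∀ x s : ℝ, HasDerivAt (fun s => a + s * x) x s := fun x s => by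
    simpa using ((hasDerivAt_id s).mul_const x).const_add a
  have H := hasDerivAt_integral_of_dominated_loc_of_deriv_le (μ := gaussianReal 0 1)
    (F := fun s x => |a + s * x| ^ p) (x₀ := s) (s := Metric.ball s 1)
    (F' := fun s x => p * (x * (|a + s * x| ^ (p - 2) * (a + s * x))))
    (bound := fun x => p * ((|a| + (|s| + 1)) ^ (p - 1) * (1 + |x|) ^ p))
    (Metric.ball_mem_nhds s one_pos)
    (Eventually.of_forall fun y => (by fun_prop : Measurable _).aestronglyMeasurable)
    (aux_int_lin a s p (by linarith))
    (by fun_prop : Measurable _).aestronglyMeasurable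
    (Eventually.of_forall fun x y hy => by
      rw [Real.norm_eq_abs, abs_mul, abs_of_nonneg (show 0 ≤ p by linarith)]
      refine mul_le_mul_of_nonneg_left ((aux_lin_bound2 a y x p hp).trans ?_) (by linarith)
      have : |y| ≤ |s| + 1 := by
        rw [Metric.mem_ball, Real.dist_eq] at hy
        have := abs_sub_abs_le_abs_sub y s
        linarith
      gcongr
      linarith)
    (((aux_int_one_add p (by linarith)).const_mul _).const_mul _)
    (Eventually.of_forall fun x y _ => by
      refine ((hasDerivAt_abs_rpow (a + y * x) (p := p) (by linarith)).comp y (hin x y)).congr_deriv ?_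
      ring)
  refine H.2.congr_deriv ?_
  have i1 : Integrable (fun x => x * (|a + s * x| ^ (p - 2) * (a + s * x))) (gaussianReal 0 1) :=
    aux_int_dom p _ (by linarith) _ (by fun_prop) (fun x => aux_lin_bound2 a s x p hp)
  have i2 : Integrable (fun x => (|a + s * x| ^ (p - 2) * (a + s * x))) (gaussianReal 0 1) := by
    refine aux_int_dom (p-1) ((|a| + |s|) ^ (p-1)) (by linarith) _ (by fun_prop) (fun x => ?_)
    rw [abs_mul, abs_of_nonneg (show (0:ℝ) ≤ |a + s * x| ^ (p - 2) by positivity)]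
    have e : |a + s * x| ^ (p - 2) * |a + s * x| = |a + s * x| ^ (p - 1) := by
      rw [show p - 1 = p - 2 + 1 by ring, Real.rpow_add_of_nonneg (abs_nonneg _) (by linarith) (by linarith), Real.rpow_one]
    rw [e]
    exact aux_lin_bound a s x _ (by linarith)
  have st := aux_stein_s15 (fun x => |a + s * x| ^ (p - 2) * (a + s * x))
    (fun x => (p - 1) * |a + s * x| ^ (p - 2) * s)
    (fun x => by
      have h0 : HasDerivAt (fun x => a + s * x) s x := by
        simpa using ((hasDerivAt_id x).const_mul s).const_add a
      exact (aux_deriv2 p hp (a + s * x)).comp x h0)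
    i1 (((aux_int_lin a s (p-2) (by linarith)).const_mul _).mul_const _) i2
  rw [integral_const_mul, st, integral_mul_const, integral_const_mul]
  ring

lemma aux_jensen_s15 (p : ℝ) (hp : 2 ≤ p) (a s : ℝ) :
    ∫ x, |a + s * x| ^ (p - 2) ∂(gaussianReal 0 1)
      ≤ (∫ x, |a + s * x| ^ p ∂(gaussianReal 0 1)) ^ ((p - 2) / p) := by
  have e : ∀ x : ℝ, (|a + s * x| ^ p) ^ ((p - 2) / p) = |a + s * x| ^ (p - 2) := fun x => by
    rw [← Real.rpow_mul (abs_nonneg _), mul_div_cancel₀ _ (by linarith)]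
  have h0 : 0 ≤ (p - 2) / p := div_nonneg (by linarith) (by linarith)
  have h := ConcaveOn.le_map_integral (μ := gaussianReal 0 1)
    (Real.concaveOn_rpow (p := (p - 2) / p) h0
      ((div_le_one (by linarith)).2 (by linarith)))
    (f := fun x => |a + s * x| ^ p)
    (fun x _ => (Real.continuousAt_rpow_const _ _ (Or.inr h0)).continuousWithinAt)
    isClosed_Ici (Eventually.of_forall fun x => by simp; positivity) (aux_int_lin a s p (by linarith))
    (by simp only [Function.comp_def, e]; exact aux_int_lin a s _ (by linarith))
  simpa only [e] using h

lemma aux_gauss_eps (p : ℝ) (hp : 2 ≤ p) (a s : ℝ) (hs : 0 ≤ s) (ε : ℝ) (hε : 0 < ε) :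
    ((∫ x, |a + s * x| ^ p ∂(gaussianReal 0 1)) + ε) ^ (2 / p)
      ≤ (|a| ^ p + ε) ^ (2 / p) + (p - 1) * s ^ 2 := by
  set f : ℝ → ℝ := fun s => ∫ x, |a + s * x| ^ p ∂(gaussianReal 0 1) with hf
  have hfn : ∀ s, 0 ≤ f s := fun s => integral_nonneg fun x => by positivity
  have hder : ∀ s, HasDerivAt (fun s => (f s + ε) ^ (2 / p) - (p - 1) * s ^ 2)
      ((p * (p - 1) * s * ∫ x, |a + s * x| ^ (p - 2) ∂(gaussianReal 0 1)) * (2 / p)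
        * (f s + ε) ^ (2 / p - 1) - (p - 1) * (2 * s)) s := fun s => by
    have h1 := ((aux_f_deriv p hp a s).add_const ε).rpow_const (p := 2 / p)
      (Or.inl (by have := hfn s; simp only [hf] at this; positivity))
    have h2 := ((hasDerivAt_id s).pow 2).const_mul (p - 1)
    refine (h1.sub h2).congr_deriv ?_
    simp [hf]
  have hanti : AntitoneOn (fun s => (f s + ε) ^ (2 / p) - (p - 1) * s ^ 2) (Ici 0) := by
    refine antitoneOn_of_deriv_nonpos (convex_Ici 0)
      (fun s _ => (hder s).continuousAt.continuousWithinAt)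
      (fun s _ => (hder s).differentiableAt.differentiableWithinAt) fun s hs => ?_
    rw [interior_Ici] at hs
    have hs : 0 < s := hs
    rw [(hder s).deriv]
    have hpos : 0 < f s + ε := by have := hfn s; positivity
    have hj : ∫ x, |a + s * x| ^ (p - 2) ∂(gaussianReal 0 1) ≤ (f s + ε) ^ ((p - 2) / p) :=
      (aux_jensen_s15 p hp a s).trans (Real.rpow_le_rpow (hfn s) (by simp only [hf]; linarith)
        (div_nonneg (by linarith) (by linarith)))
    have e1 : (f s + ε) ^ ((p - 2) / p) * (f s + ε) ^ (2 / p - 1) = 1 := by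
      rw [← Real.rpow_add hpos]
      have : (p - 2) / p + (2 / p - 1) = 0 := by field_simp; ring
      rw [this, Real.rpow_zero]
    have e2 : (∫ x, |a + s * x| ^ (p - 2) ∂(gaussianReal 0 1)) * (f s + ε) ^ (2 / p - 1) ≤ 1 := by
      exact (mul_le_mul_of_nonneg_right hj (by positivity)).trans e1.le
    have e3 : (p * (p - 1) * s * ∫ x, |a + s * x| ^ (p - 2) ∂(gaussianReal 0 1)) * (2 / p)
        * (f s + ε) ^ (2 / p - 1) = ((p - 1) * (2 * s)) *
        ((∫ x, |a + s * x| ^ (p - 2) ∂(gaussianReal 0 1)) * (f s + ε) ^ (2 / p - 1)) := by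
      field_simp
    rw [e3]
    have : 0 ≤ (p - 1) * (2 * s) := mul_nonneg (by linarith) (by linarith)
    nlinarith
  have := hanti (mem_Ici.2 (le_refl (0:ℝ))) (show s ∈ Ici 0 from hs) hs
  simp only [hf] at this ⊢
  simp at this
  linarith

lemma aux_gauss (p : ℝ) (hp : 2 ≤ p) (a s : ℝ) (hs : 0 ≤ s) :
    ∫ x, |a + s * x| ^ p ∂(gaussianReal 0 1) ≤ (a ^ 2 + (p - 1) * s ^ 2) ^ (p / 2) := by
  set I := ∫ x, |a + s * x| ^ p ∂(gaussianReal 0 1) with hI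
  have hI0 : 0 ≤ I := integral_nonneg fun x => by positivity
  have hp0 : 0 < p := by linarith
  have h1 : ∀ c : ℝ, 0 ≤ c → Tendsto (fun ε => (c + ε) ^ (2 / p)) (nhdsWithin 0 (Ioi 0)) (nhds (c ^ (2 / p))) := by
    intro c hc
    have : Continuous (fun ε : ℝ => (c + ε) ^ (2 / p)) :=
      (continuous_const.add continuous_id).rpow_const (fun _ => Or.inr (by positivity))
    simpa using (this.tendsto 0).mono_left (nhdsWithin_le_nhds (s := Ioi 0))
  have h2 : I ^ (2 / p) ≤ (|a| ^ p) ^ (2 / p) + (p - 1) * s ^ 2 :=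
    le_of_tendsto_of_tendsto (h1 I hI0) ((h1 (|a| ^ p) (by positivity)).add_const _)
      (by filter_upwards [self_mem_nhdsWithin] with ε hε using aux_gauss_eps p hp a s hs ε hε)
  have e1 : (|a| ^ p) ^ (2 / p) = a ^ 2 := by
    rw [← Real.rpow_mul (abs_nonneg _), mul_div_cancel₀ _ hp0.ne']
    simp
  have e2 : I = (I ^ (2 / p)) ^ (p / 2) := by
    rw [← Real.rpow_mul hI0]; field_simp; simp
  rw [e1] at h2
  rw [e2]
  exact Real.rpow_le_rpow (by positivity) h2 (by positivity)

lemma aux_gauss_lint (p : ℝ) (hp : 2 ≤ p) (a v : ℝ) (hv : 0 ≤ v) :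
    ∫⁻ x, ENNReal.ofReal (|a + x| ^ p) ∂(gaussianReal 0 v.toNNReal)
      ≤ ENNReal.ofReal ((a ^ 2 + (p - 1) * v) ^ (p / 2)) := by
  have hm : gaussianReal 0 v.toNNReal = (gaussianReal 0 1).map (fun x => √v * x) := by
    rw [gaussianReal_map_const_mul]
    congr 1
    · simp
    · ext; simp [Real.sq_sqrt hv, hv]
  rw [hm, lintegral_map (by fun_prop) (by fun_prop),
    ← ofReal_integral_eq_lintegral_ofReal (aux_int_lin a _ p (by linarith))
      (Eventually.of_forall fun x => by positivity)]
  refine ENNReal.ofReal_le_ofReal ?_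
  have := aux_gauss p hp a (√v) (Real.sqrt_nonneg v)
  rwa [Real.sq_sqrt hv] at this

section cond

set_option linter.unusedSectionVars false

variable {Ω : Type*} {G : MeasurableSpace Ω} {mΩ : MeasurableSpace Ω} {P : Measure Ω}

lemma aux_eLpNorm_ofReal {F' : Type*} [NormedAddCommGroup F'] (f : Ω → F') (q : ℝ) (hq : 0 < q) :
    eLpNorm f (ENNReal.ofReal q) P = (∫⁻ ω, ‖f ω‖ₑ ^ q ∂P) ^ (1 / q) := by
  rw [eLpNorm_eq_lintegral_rpow_enorm_toReal (by simpa using hq) (by simp),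
    ENNReal.toReal_ofReal hq.le]

lemma aux_eLpNorm_sq {F' : Type*} [NormedAddCommGroup F'] (f : Ω → F') (r : ℝ) (hr : 0 < r) :
    eLpNorm (fun ω => ‖f ω‖ ^ 2) (ENNReal.ofReal r) P
      = (eLpNorm f (ENNReal.ofReal (2 * r)) P) ^ 2 := by
  have h := eLpNorm_norm_rpow (p := ENNReal.ofReal r) (q := 2) (μ := P) f (by norm_num)
  rw [← ENNReal.ofReal_mul hr.le, mul_comm r 2] at h
  rw [← ENNReal.rpow_two, ← h]
  simp

variable [IsProbabilityMeasure P]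

/-- `(X, D)` has product law when `X` is `G`-measurable and `D` is independent of `G`. -/
lemma aux_map_prod {α E : Type*} [MeasurableSpace α] [MeasurableSpace E]
    (hG : G ≤ mΩ) (D : Ω → E) (hD : Measurable D)
    (hind : Indep (MeasurableSpace.comap D inferInstance) G P)
    (X : Ω → α) (hX : Measurable[G] X) :
    P.map (fun ω => (X ω, D ω)) = (P.map X).prod (P.map D) := by
  have hX' : Measurable X := hX.mono hG le_rfl
  rw [← indepFun_iff_map_prod_eq_prod_map_map hX'.aemeasurable hD.aemeasurable,
    IndepFun_iff_Indep]
  exact indep_of_indep_of_le_left hind.symm (measurable_iff_comap_le.1 hX)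

lemma aux_cond_eLpNorm {α E F' : Type*} [MeasurableSpace α] [MeasurableSpace E]
    [NormedAddCommGroup F'] [MeasurableSpace F'] [BorelSpace F'] 
    (hG : G ≤ mΩ) (D : Ω → E) (hD : Measurable D)
    (hind : Indep (MeasurableSpace.comap D inferInstance) G P)
    (X : Ω → α) (hX : Measurable[G] X) (Ψ : α → E → F') (hΨ : Measurable (fun z : α × E => Ψ z.1 z.2))
    (K : α → ℝ) (_hK : Measurable K) (q : ℝ) (hq : 0 < q)
    (hb : ∀ x, eLpNorm (fun ω => Ψ x (D ω)) (ENNReal.ofReal q) P ≤ ‖K x‖ₑ) :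
    eLpNorm (fun ω => Ψ (X ω) (D ω)) (ENNReal.ofReal q) P
      ≤ eLpNorm (fun ω => K (X ω)) (ENNReal.ofReal q) P := by
  have hX' : Measurable X := hX.mono hG le_rfl
  rw [aux_eLpNorm_ofReal _ q hq, aux_eLpNorm_ofReal _ q hq]
  refine ENNReal.rpow_le_rpow ?_ (by positivity)
  have hm : Measurable (fun z : α × E => ‖Ψ z.1 z.2‖ₑ ^ q) := hΨ.enorm.pow_const q
  have h1 : ∫⁻ ω, ‖Ψ (X ω) (D ω)‖ₑ ^ q ∂P
      = ∫⁻ z, ‖Ψ z.1 z.2‖ₑ ^ q ∂(P.map (fun ω => (X ω, D ω))) := by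
    rw [lintegral_map hm (hX'.prodMk hD)]
  rw [h1, aux_map_prod hG D hD hind X hX]
  have : IsProbabilityMeasure (P.map D) := Measure.isProbabilityMeasure_map hD.aemeasurable
  rw [lintegral_prod _ hm.aemeasurable, lintegral_map hm.lintegral_prod_right' hX']
  refine lintegral_mono fun ω => ?_
  simp only
  have hm2 : Measurable (fun y => ‖Ψ (X ω) y‖ₑ ^ q) := hm.comp measurable_prodMk_left
  rw [lintegral_map hm2 hD]
  have := hb (X ω)
  rw [aux_eLpNorm_ofReal _ q hq] at this
  have h2 := ENNReal.rpow_le_rpow this hq.le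
  rwa [← ENNReal.rpow_mul, one_div, inv_mul_cancel₀ hq.ne', ENNReal.rpow_one] at h2

variable {m : ℕ}

lemma aux_det_step (D : Ω → EuclideanSpace ℝ (Fin m)) (hD : Measurable D) (h : ℝ) (hh : 0 ≤ h)
    (hlaw : ∀ l : EuclideanSpace ℝ (Fin m),
      Measure.map (fun ω => ⟪l, D ω⟫) P = gaussianReal 0 (Real.toNNReal (h * ‖l‖ ^ 2)))
    (p : ℝ) (hp : 2 ≤ p) (a : ℝ) (l : EuclideanSpace ℝ (Fin m)) :
    eLpNorm (fun ω => a + ⟪l, D ω⟫) (ENNReal.ofReal p) P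
      ≤ ‖√(a ^ 2 + ((p - 1) * h) * ‖l‖ ^ 2)‖ₑ := by
  have hp0 : 0 < p := by linarith
  have h0 : 0 ≤ a ^ 2 + ((p - 1) * h) * ‖l‖ ^ 2 := by
    have := mul_nonneg (show 0 ≤ p - 1 by linarith) hh
    positivity
  rw [aux_eLpNorm_ofReal _ p hp0]
  have e : ∫⁻ ω, ‖a + ⟪l, D ω⟫‖ₑ ^ p ∂P = ∫⁻ x, ENNReal.ofReal (|a + x| ^ p)
      ∂(gaussianReal 0 (Real.toNNReal (h * ‖l‖ ^ 2))) := by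
    rw [← hlaw l, lintegral_map (by fun_prop) (by fun_prop)]
    refine lintegral_congr fun ω => ?_
    rw [← ENNReal.ofReal_rpow_of_nonneg (abs_nonneg _) hp0.le, ← Real.norm_eq_abs, ofReal_norm]
  have h1 := aux_gauss_lint p hp a (h * ‖l‖ ^ 2) (by positivity)
  rw [e]
  refine (ENNReal.rpow_le_rpow h1 (by positivity)).trans ?_
  rw [ENNReal.ofReal_rpow_of_nonneg (by rw [← mul_assoc]; positivity) (by positivity), ← mul_assoc,
    ← Real.rpow_mul h0, Real.enorm_eq_ofReal (Real.sqrt_nonneg _), Real.sqrt_eq_rpow]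
  refine (congrArg _ (congrArg _ ?_)).le
  field_simp

/-- One step martingale inequality. -/
lemma aux_step (hG : G ≤ mΩ)
    (D : Ω → EuclideanSpace ℝ (Fin m)) (hD : Measurable D)
    (hind : Indep (MeasurableSpace.comap D inferInstance) G P) (h : ℝ) (hh : 0 ≤ h)
    (hlaw : ∀ l : EuclideanSpace ℝ (Fin m),
      Measure.map (fun ω => ⟪l, D ω⟫) P = gaussianReal 0 (Real.toNNReal (h * ‖l‖ ^ 2)))
    (p : ℝ) (hp : 2 ≤ p) (M : Ω → ℝ) (hM : Measurable[G] M)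
    (g : Ω → EuclideanSpace ℝ (Fin m)) (hg : Measurable[G] g) :
    (eLpNorm (fun ω => M ω + ⟪g ω, D ω⟫) (ENNReal.ofReal p) P) ^ 2
      ≤ (eLpNorm M (ENNReal.ofReal p) P) ^ 2
        + ENNReal.ofReal ((p - 1) * h) * (eLpNorm g (ENNReal.ofReal p) P) ^ 2 := by
  have hp0 : 0 < p := by linarith
  have hc : 0 ≤ (p - 1) * h := mul_nonneg (by linarith) hh
  have hM' : Measurable M := hM.mono hG le_rfl
  have hg' : Measurable g := hg.mono hG le_rfl
  have h1 := aux_cond_eLpNorm (P := P) hG D hD hind (fun ω => (M ω, g ω)) (hM.prodMk hg)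
    (fun x d => x.1 + ⟪x.2, d⟫) (by fun_prop)
    (fun x => √(x.1 ^ 2 + ((p - 1) * h) * ‖x.2‖ ^ 2)) (by fun_prop) p hp0
    (fun x => aux_det_step D hD h hh hlaw p hp x.1 x.2)
  refine (pow_le_pow_left' h1 2).trans ?_
  have e2 : (2:ℝ) * (p / 2) = p := by ring
  have s1 := aux_eLpNorm_sq (P := P) (fun ω => √(M ω ^ 2 + ((p - 1) * h) * ‖g ω‖ ^ 2)) (p / 2) (by positivity)
  have s2 := aux_eLpNorm_sq (P := P) M (p / 2) (by positivity)
  have s3 := aux_eLpNorm_sq (P := P) g (p / 2) (by positivity)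
  rw [e2] at s1 s2 s3
  simp only
  rw [← s1, ← s2, ← s3]
  have e3 : (fun ω => ‖√(M ω ^ 2 + ((p - 1) * h) * ‖g ω‖ ^ 2)‖ ^ 2)
      = (fun ω => ‖M ω‖ ^ 2) + ((p - 1) * h) • (fun ω => ‖g ω‖ ^ 2) := by
    funext ω
    simp only [Real.norm_eq_abs, sq_abs, Pi.add_apply, Pi.smul_apply, smul_eq_mul]
    rw [Real.sq_sqrt (by positivity)]
  rw [e3]
  refine (eLpNorm_add_le (by fun_prop) (by fun_prop) ?_).trans ?_
  · rw [← ENNReal.ofReal_one]; exact ENNReal.ofReal_le_ofReal (by linarith)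
  · rw [eLpNorm_const_smul, Real.enorm_eq_ofReal hc]

lemma aux_mean_zero (hG : G ≤ mΩ)
    (D : Ω → EuclideanSpace ℝ (Fin m)) (hD : Measurable D)
    (hind : Indep (MeasurableSpace.comap D inferInstance) G P) (h : ℝ)
    (hlaw : ∀ l : EuclideanSpace ℝ (Fin m),
      Measure.map (fun ω => ⟪l, D ω⟫) P = gaussianReal 0 (Real.toNNReal (h * ‖l‖ ^ 2)))
    (H : Ω → ℝ) (hH : Measurable[G] H)
    (g : Ω → EuclideanSpace ℝ (Fin m)) (hg : Measurable[G] g)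
    (hInt : Integrable (fun ω => H ω * ⟪g ω, D ω⟫) P) :
    ∫ ω, H ω * ⟪g ω, D ω⟫ ∂P = 0 := by
  have hX : Measurable[G] (fun ω => (H ω, g ω)) := hH.prodMk hg
  have hX' : Measurable (fun ω => (H ω, g ω)) := hX.mono hG le_rfl
  have hm : Measurable (fun z : (ℝ × EuclideanSpace ℝ (Fin m)) × EuclideanSpace ℝ (Fin m) =>
    z.1.1 * ⟪z.1.2, z.2⟫) := by fun_prop
  have hmp := aux_map_prod (P := P) hG D hD hind _ hX
  have e1 : ∫ ω, H ω * ⟪g ω, D ω⟫ ∂P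
    = ∫ z, z.1.1 * ⟪z.1.2, z.2⟫ ∂(P.map (fun ω => ((H ω, g ω), D ω))) := by
    rw [integral_map (hX'.prodMk hD).aemeasurable hm.aestronglyMeasurable]
  have i1 : Integrable (fun z : (ℝ × EuclideanSpace ℝ (Fin m)) × EuclideanSpace ℝ (Fin m) =>
    z.1.1 * ⟪z.1.2, z.2⟫) (P.map (fun ω => ((H ω, g ω), D ω))) := by
    rw [integrable_map_measure hm.aestronglyMeasurable (hX'.prodMk hD).aemeasurable]
    exact hInt
  have : IsProbabilityMeasure (P.map D) := Measure.isProbabilityMeasure_map hD.aemeasurable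
  have : IsProbabilityMeasure (P.map (fun ω => (H ω, g ω))) :=
    Measure.isProbabilityMeasure_map hX'.aemeasurable
  rw [hmp] at i1
  rw [e1, hmp, integral_prod _ i1]
  refine integral_eq_zero_of_ae (Eventually.of_forall fun x => ?_)
  simp only [Pi.zero_apply]
  rw [integral_const_mul, integral_map hD.aemeasurable (by fun_prop)]
  have : ∫ ω, ⟪x.2, D ω⟫ ∂P = ∫ y, y ∂(P.map (fun ω => ⟪x.2, D ω⟫)) := by
    rw [integral_map (by fun_prop) (by fun_prop)]
  rw [this, hlaw, integral_id_gaussianReal, mul_zero]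

end cond

section mat

set_option linter.unusedSectionVars false

/-- The `i`-th row of a matrix as a Euclidean vector. -/
def auxRow {d m : ℕ} (A : Matrix (Fin d) (Fin m) ℝ) (i : Fin d) : EuclideanSpace ℝ (Fin m) :=
  WithLp.toLp 2 (A i)

lemma aux_matMulVec_apply {d m : ℕ} (A : Matrix (Fin d) (Fin m) ℝ) (v : EuclideanSpace ℝ (Fin m))
    (i : Fin d) : matMulVec A v i = ∑ j, A i j * v j := by
  simp [matMulVec, Matrix.mulVec, dotProduct]

lemma aux_matMulVec_row {d m : ℕ} (A : Matrix (Fin d) (Fin m) ℝ) (v : EuclideanSpace ℝ (Fin m))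
    (i : Fin d) : matMulVec A v i = ⟪auxRow A i, v⟫ := by
  rw [aux_matMulVec_apply, PiLp.inner_apply]
  simp [auxRow, mul_comm]

lemma aux_inner_matMulVec {d m : ℕ} (A : Matrix (Fin d) (Fin m) ℝ) (v : EuclideanSpace ℝ (Fin m))
    (y : EuclideanSpace ℝ (Fin d)) : ⟪y, matMulVec A v⟫ = ⟪matMulVec A.transpose y, v⟫ := by
  rw [PiLp.inner_apply, PiLp.inner_apply]
  simp only [aux_matMulVec_apply, Matrix.transpose_apply]
  simp only [RCLike.inner_apply, conj_trivial, Finset.sum_mul, Finset.mul_sum]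
  rw [Finset.sum_comm]
  refine Finset.sum_congr rfl fun i _ => Finset.sum_congr rfl fun j _ => ?_
  ring

lemma aux_frob_sq {d m : ℕ} (A : Matrix (Fin d) (Fin m) ℝ) :
    ‖A‖ ^ 2 = ∑ i, ‖auxRow A i‖ ^ 2 := by
  rw [Matrix.frobenius_norm_def, ← Real.sqrt_eq_rpow, Real.sq_sqrt (by positivity)]
  simp [EuclideanSpace.norm_sq_eq, auxRow]

variable {Ω : Type*} {G : MeasurableSpace Ω} {mΩ : MeasurableSpace Ω} {P : Measure Ω}
  [IsProbabilityMeasure P]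

lemma aux_det_mat {d m : ℕ} (D : Ω → EuclideanSpace ℝ (Fin m)) (hD : Measurable D) (h : ℝ) (hh : 0 ≤ h)
    (hlaw : ∀ l : EuclideanSpace ℝ (Fin m),
      Measure.map (fun ω => ⟪l, D ω⟫) P = gaussianReal 0 (Real.toNNReal (h * ‖l‖ ^ 2)))
    (p : ℝ) (hp : 1 ≤ p) (A : Matrix (Fin d) (Fin m) ℝ) :
    eLpNorm (fun ω => matMulVec A (D ω)) (ENNReal.ofReal (2 * p)) P
      ≤ ‖√((2 * p - 1) * h) * ‖A‖‖ₑ := by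
  have hc : 0 ≤ (2 * p - 1) * h := mul_nonneg (by linarith) hh
  have hsq : (eLpNorm (fun ω => matMulVec A (D ω)) (ENNReal.ofReal (2 * p)) P) ^ 2
      ≤ ‖√((2 * p - 1) * h) * ‖A‖‖ₑ ^ 2 := by
    rw [← aux_eLpNorm_sq _ p (by linarith)]
    have e : (fun ω => ‖matMulVec A (D ω)‖ ^ 2) = ∑ i, fun ω => ‖⟪auxRow A i, D ω⟫‖ ^ 2 := by
      funext ω
      rw [EuclideanSpace.norm_sq_eq, Finset.sum_apply]
      simp only [aux_matMulVec_row]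
    rw [e]
    refine (eLpNorm_sum_le (fun i _ => by fun_prop) ?_).trans ?_
    · rw [← ENNReal.ofReal_one]; exact ENNReal.ofReal_le_ofReal (by linarith)
    have hi : ∀ i, eLpNorm (fun ω => ‖⟪auxRow A i, D ω⟫‖ ^ 2) (ENNReal.ofReal p) P
        ≤ ENNReal.ofReal ((2 * p - 1) * h * ‖auxRow A i‖ ^ 2) := fun i => by
      rw [aux_eLpNorm_sq _ p (by linarith)]
      have := aux_det_step D hD h hh hlaw (2 * p) (by linarith) 0 (auxRow A i)
      simp only [zero_add] at this
      refine (pow_le_pow_left' this 2).trans ?_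
      rw [Real.enorm_eq_ofReal (Real.sqrt_nonneg _), ← ENNReal.ofReal_pow (Real.sqrt_nonneg _),
        Real.sq_sqrt (by positivity)]
      simp
    refine (Finset.sum_le_sum fun i _ => hi i).trans ?_
    rw [← ENNReal.ofReal_sum_of_nonneg (fun i _ => by positivity), ← Finset.mul_sum, ← aux_frob_sq,
      Real.enorm_eq_ofReal (by positivity), ← ENNReal.ofReal_pow (by positivity), mul_pow,
      Real.sq_sqrt hc]
  exact (ENNReal.pow_le_pow_left_iff two_ne_zero).1 hsq

lemma aux_mat {d m : ℕ} (hG : G ≤ mΩ)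
    (D : Ω → EuclideanSpace ℝ (Fin m)) (hD : Measurable D)
    (hind : Indep (MeasurableSpace.comap D inferInstance) G P) (h : ℝ) (hh : 0 ≤ h)
    (hlaw : ∀ l : EuclideanSpace ℝ (Fin m),
      Measure.map (fun ω => ⟪l, D ω⟫) P = gaussianReal 0 (Real.toNNReal (h * ‖l‖ ^ 2)))
    (p : ℝ) (hp : 1 ≤ p) (A : Ω → Matrix (Fin d) (Fin m) ℝ)
    (hA : ∀ i j, Measurable[G] (fun ω => A ω i j)) :
    (eLpNorm (fun ω => matMulVec (A ω) (D ω)) (ENNReal.ofReal (2 * p)) P) ^ 2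
      ≤ ENNReal.ofReal ((2 * p - 1) * h) * (eLpNorm A (ENNReal.ofReal (2 * p)) P) ^ 2 := by
  have hc : 0 ≤ (2 * p - 1) * h := mul_nonneg (by linarith) hh
  have h1 := aux_cond_eLpNorm (P := P) (α := Fin d → Fin m → ℝ) hG D hD hind (fun ω i j => A ω i j)
    (@measurable_pi_lambda _ _ _ G _ _ fun i => @measurable_pi_lambda _ _ _ G _ _ fun j => hA i j)
    (fun x v => matMulVec (Matrix.of x) v)
    (by
      unfold matMulVec
      refine (EuclideanSpace.equiv (Fin d) ℝ).symm.continuous.measurable.comp ?_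
      refine measurable_pi_lambda _ fun i => ?_
      simp only [Matrix.mulVec, dotProduct, Matrix.of_apply]
      refine Finset.measurable_sum _ fun j _ => ?_
      have h1 : Measurable fun z : (Fin d → Fin m → ℝ) × EuclideanSpace ℝ (Fin m) => z.1 i j := by
        fun_prop
      have h2 : Measurable fun z : (Fin d → Fin m → ℝ) × EuclideanSpace ℝ (Fin m) =>
        (EuclideanSpace.equiv (Fin m) ℝ) z.2 j := by
        simp only [PiLp.continuousLinearEquiv_apply]
        fun_prop
      exact h1.mul h2)
    (fun x => √((2 * p - 1) * h) * ‖Matrix.of x‖) (by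
      simp only [Matrix.frobenius_norm_def, Matrix.of_apply]
      fun_prop) (2 * p) (by linarith)
    (fun x => aux_det_mat D hD h hh hlaw p hp (Matrix.of x))
  refine (pow_le_pow_left' h1 2).trans ?_
  have e : (fun ω => √((2 * p - 1) * h) * ‖Matrix.of (fun i j => A ω i j)‖)
      = √((2 * p - 1) * h) • (fun ω => ‖A ω‖) := by
    funext ω; simp; exact Or.inl rfl
  rw [e, eLpNorm_const_smul, mul_pow, eLpNorm_norm, Real.enorm_eq_ofReal (Real.sqrt_nonneg _),
    ← ENNReal.ofReal_pow (Real.sqrt_nonneg _), Real.sq_sqrt hc]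

end mat

section doob

set_option linter.unusedSectionVars false

/-- Running maximum of `|M i|`. -/
def auxMax {Ω : Type*} (M : ℕ → Ω → ℝ) : ℕ → Ω → ℝ
  | 0 => fun ω => |M 0 ω|
  | (i + 1) => fun ω => max (auxMax M i ω) |M (i + 1) ω|

lemma auxMax_nonneg {Ω : Type*} (M : ℕ → Ω → ℝ) (i : ℕ) (ω : Ω) : 0 ≤ auxMax M i ω := by
  cases i with
  | zero => exact abs_nonneg _
  | succ i => exact (abs_nonneg _).trans (le_max_right _ _)

lemma auxMax_ge {Ω : Type*} (M : ℕ → Ω → ℝ) (k i : ℕ) (hi : i ≤ k) (ω : Ω) :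
    |M i ω| ≤ auxMax M k ω := by
  induction k with
  | zero => obtain rfl : i = 0 := by omega
            exact le_rfl
  | succ k ih =>
    rcases hi.eq_or_lt with rfl | h
    · exact le_max_right _ _
    · exact (ih (by omega)).trans (le_max_left _ _)

lemma aux_young (p y z : ℝ) (hp : 2 ≤ p) (hy : 0 ≤ y) (hz : 0 ≤ z) :
    (p - 1) / p * (y ^ p - z ^ p) ≤ y * (y ^ (p - 1) - z ^ (p - 1)) := by
  have hp0 : 0 < p := by linarith
  have hpq : p.HolderConjugate (p / (p - 1)) := Real.HolderConjugate.conjExponent (by linarith)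
  have h := Real.young_inequality_of_nonneg hy (Real.rpow_nonneg hz (p - 1)) hpq
  rw [← Real.rpow_mul hz, mul_div_cancel₀ _ (by linarith)] at h
  have e : y * y ^ (p - 1) = y ^ p := by
    rw [mul_comm, show p = p - 1 + 1 by ring, Real.rpow_add_of_nonneg hy (by linarith) (by linarith)]
    simp
  have e2 : z ^ p / (p / (p - 1)) = (p - 1) / p * z ^ p := by field_simp
  have e3 : (p - 1) / p * y ^ p = y ^ p - y ^ p / p := by field_simp
  rw [mul_sub, mul_sub, e, e3]
  linarith

lemma aux_doob_path {Ω : Type*} (M ξ : ℕ → Ω → ℝ) (k : ℕ) (p : ℝ) (hp : 2 ≤ p) (ω : Ω)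
    (hM0 : M 0 ω = 0) (hrec : ∀ i < k, M (i + 1) ω = M i ω + ξ i ω) :
    (p - 1) / p * auxMax M k ω ^ p ≤ auxMax M k ω ^ (p - 1) * |M k ω|
      - ∑ i ∈ Finset.range k, auxMax M i ω ^ (p - 1) * (SignType.sign (M i ω) : ℝ) * ξ i ω := by
  induction k with
  | zero => simp [auxMax, hM0, Real.zero_rpow (show p ≠ 0 by linarith)]
  | succ k ih =>
    have ih := ih fun i hi => hrec i (by omega)
    rw [Finset.sum_range_succ]
    have hr := hrec k (by omega)
    set a := auxMax M k ω with ha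
    have ha0 : 0 ≤ a := auxMax_nonneg M k ω
    have hb : auxMax M (k + 1) ω = max a |M (k + 1) ω| := rfl
    set b := auxMax M (k + 1) ω with hb'
    have hb0 : 0 ≤ b := auxMax_nonneg M (k + 1) ω
    have hy := aux_young p b a hp hb0 ha0
    have hx : b * (b ^ (p - 1) - a ^ (p - 1)) = |M (k + 1) ω| * (b ^ (p - 1) - a ^ (p - 1)) := by
      rcases max_choice a |M (k + 1) ω| with h | h
      · rw [hb, h]; simp
      · rw [hb, h]
    have hs : |M k ω| + (SignType.sign (M k ω) : ℝ) * ξ k ω ≤ |M (k + 1) ω| := by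
      rw [hr]
      rcases lt_trichotomy (M k ω) 0 with h | h | h
      · simp only [h, sign_neg, abs_of_neg, SignType.coe_neg_one]
        have := neg_le_abs (M k ω + ξ k ω); linarith
      · simp [h]
      · simp only [h, sign_pos, abs_of_pos, SignType.coe_one]
        have := le_abs_self (M k ω + ξ k ω); linarith
    have hap : 0 ≤ a ^ (p - 1) := by positivity
    have := mul_le_mul_of_nonneg_left hs hap
    rw [hx] at hy
    nlinarith

variable {Ω : Type*} {mΩ : MeasurableSpace Ω} {P : Measure Ω}
  [IsProbabilityMeasure P]

lemma aux_doob (M ξ : ℕ → Ω → ℝ) (k : ℕ) (p : ℝ) (hp : 2 ≤ p)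
    (hM0 : ∀ ω, M 0 ω = 0) (hrec : ∀ i < k, ∀ ω, M (i + 1) ω = M i ω + ξ i ω)
    (𝒢 : ℕ → MeasurableSpace Ω) (h𝒢 : ∀ i ≤ k, 𝒢 i ≤ mΩ) (hmono : ∀ i < k, 𝒢 i ≤ 𝒢 (i + 1))
    (hMm : ∀ i ≤ k, Measurable[𝒢 i] (M i)) (hξ : ∀ i < k, MemLp (ξ i) (ENNReal.ofReal p) P)
    (hz : ∀ i < k, ∀ H : Ω → ℝ, Measurable[𝒢 i] H → Integrable (fun ω => H ω * ξ i ω) P →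
      ∫ ω, H ω * ξ i ω ∂P = 0) :
    eLpNorm (auxMax M k) (ENNReal.ofReal p) P
      ≤ ENNReal.ofReal (p / (p - 1)) * eLpNorm (M k) (ENNReal.ofReal p) P := by
  have hp0 : 0 < p := by linarith
  have hLM : ∀ i ≤ k, MemLp (M i) (ENNReal.ofReal p) P := by
    intro i
    induction i with
    | zero => intro _; rw [show M 0 = fun _ => 0 from funext hM0]; exact MemLp.zero
    | succ i ih =>
      intro hi
      rw [show M (i + 1) = M i + ξ i from funext (hrec i (by omega))]
      exact (ih (by omega)).add (hξ i (by omega))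
  have hmm : ∀ i ≤ k, Measurable[𝒢 i] (auxMax M i) := by
    intro i
    induction i with
    | zero => intro h0; exact continuous_abs.measurable.comp (hMm 0 h0)
    | succ i ih =>
      intro hi
      have hmx : Measurable (fun z : ℝ × ℝ => max z.1 |z.2|) := by fun_prop
      exact hmx.comp (((ih (by omega)).mono (hmono i (by omega)) le_rfl).prodMk (hMm (i + 1) hi))
  have hLm : ∀ i ≤ k, MemLp (auxMax M i) (ENNReal.ofReal p) P := by
    intro i
    induction i with
    | zero => intro h0; exact (hLM 0 h0).abs
    | succ i ih => intro hi; exact (ih (by omega)).sup (hLM (i + 1) hi).abs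
  have hpq : p.HolderConjugate (p / (p - 1)) := Real.HolderConjugate.conjExponent (by linarith)
  have hLq : ∀ i ≤ k, MemLp (fun ω => auxMax M i ω ^ (p - 1)) (ENNReal.ofReal (p / (p - 1))) P := by
    intro i hi
    have := (hLm i hi).norm_rpow_div (ENNReal.ofReal (p - 1))
    rw [ENNReal.toReal_ofReal (by linarith), ← ENNReal.ofReal_div_of_pos (by linarith)] at this
    refine this.congr_norm ?_ ?_
    · exact (((hmm i hi).mono (h𝒢 i hi) le_rfl).pow_const _).aestronglyMeasurable
    · refine Eventually.of_forall fun ω => ?_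
      simp only [Real.norm_eq_abs, abs_of_nonneg (auxMax_nonneg M i ω)]
  have hHC : (ENNReal.ofReal (p / (p - 1))).HolderConjugate (ENNReal.ofReal p) :=
    hpq.symm.ennrealOfReal
  have iH : ∀ i, ∀ hi : i < k, Integrable (fun ω => auxMax M i ω ^ (p - 1) * (SignType.sign (M i ω) : ℝ) * ξ i ω) P := by
    intro i hi
    have hL : MemLp (fun ω => auxMax M i ω ^ (p - 1) * (SignType.sign (M i ω) : ℝ)) (ENNReal.ofReal (p / (p - 1))) P := by
      refine (hLq i hi.le).mono ?_ ?_
      · have h1 := (hmm i hi.le).mono (h𝒢 i hi.le) le_rfl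
        have h2 := (hMm i hi.le).mono (h𝒢 i hi.le) le_rfl
        have h3 : Measurable (fun x : ℝ => (SignType.sign x : ℝ)) := by
          have : (fun x : ℝ => (SignType.sign x : ℝ)) = fun x => if 0 < x then 1 else if x < 0 then -1 else 0 := by
            funext x; rw [sign_apply]; split_ifs <;> simp
          rw [this]
          exact Measurable.ite measurableSet_Ioi measurable_const
            (Measurable.ite measurableSet_Iio measurable_const measurable_const)
        exact ((h1.pow_const _).mul (h3.comp h2)).aestronglyMeasurable
      · refine Eventually.of_forall fun ω => ?_
        rw [norm_mul]
        refine mul_le_of_le_one_right (norm_nonneg _) ?_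
        rcases lt_trichotomy (M i ω) 0 with h | h | h <;> simp [h]
    exact MemLp.integrable_mul hL (hξ i hi)
  have hsgn : ∀ i, ∀ hi : i < k, ∫ ω, auxMax M i ω ^ (p - 1) * (SignType.sign (M i ω) : ℝ) * ξ i ω ∂P = 0 := by
    intro i hi
    refine hz i hi _ ?_ (iH i hi)
    have h3 : Measurable (fun x : ℝ => (SignType.sign x : ℝ)) := by
      have : (fun x : ℝ => (SignType.sign x : ℝ)) = fun x => if 0 < x then 1 else if x < 0 then -1 else 0 := by
        funext x; rw [sign_apply]; split_ifs <;> simp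
      rw [this]
      exact Measurable.ite measurableSet_Ioi measurable_const
        (Measurable.ite measurableSet_Iio measurable_const measurable_const)
    exact ((hmm i hi.le).pow_const _).mul (h3.comp (hMm i hi.le))
  have iA : Integrable (fun ω => auxMax M k ω ^ (p - 1) * |M k ω|) P :=
    MemLp.integrable_mul (hLq k le_rfl) (hLM k le_rfl).abs
  have iB : Integrable (fun ω => auxMax M k ω ^ p) P := by
    have := (hLm k le_rfl).integrable_norm_rpow (by simpa using hp0) (by simp)
    rw [ENNReal.toReal_ofReal hp0.le] at this
    refine this.congr (Eventually.of_forall fun ω => ?_)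
    simp only [Real.norm_eq_abs, abs_of_nonneg (auxMax_nonneg M k ω)]
  have hI := integral_mono (iB.const_mul ((p - 1) / p))
    (iA.sub (integrable_finsetSum (Finset.range k) fun i hi => iH i (Finset.mem_range.1 hi)))
    (fun ω => by
      simpa using aux_doob_path M ξ k p hp ω (hM0 ω) (fun i hi => hrec i hi ω))
  simp only [Pi.sub_apply] at hI
  rw [integral_sub iA (integrable_finsetSum (Finset.range k) fun i hi => iH i (Finset.mem_range.1 hi)),
    integral_finsetSum _ (fun i hi => iH i (Finset.mem_range.1 hi)),
    Finset.sum_eq_zero (fun i hi => hsgn i (Finset.mem_range.1 hi)), sub_zero, integral_const_mul] at hI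
  have hH := integral_mul_le_Lp_mul_Lq_of_nonneg (μ := P) hpq.symm
    (f := fun ω => auxMax M k ω ^ (p - 1)) (g := fun ω => |M k ω|)
    (Eventually.of_forall fun ω => Real.rpow_nonneg (auxMax_nonneg M k ω) _)
    (Eventually.of_forall fun ω => abs_nonneg _) (hLq k le_rfl) (hLM k le_rfl).abs
  have eB : ∀ ω, (auxMax M k ω ^ (p - 1)) ^ (p / (p - 1)) = auxMax M k ω ^ p := fun ω => by
    rw [← Real.rpow_mul (auxMax_nonneg M k ω), mul_div_cancel₀ _ (by linarith)]
  simp only [eB] at hH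
  rw [(hLm k le_rfl).eLpNorm_eq_integral_rpow_norm (by simpa using hp0) (by simp),
    (hLM k le_rfl).eLpNorm_eq_integral_rpow_norm (by simpa using hp0) (by simp),
    ENNReal.toReal_ofReal hp0.le,
    ← ENNReal.ofReal_mul (div_nonneg hp0.le (by linarith))]
  refine ENNReal.ofReal_le_ofReal ?_
  simp only [Real.norm_eq_abs, abs_of_nonneg (auxMax_nonneg M k _)]
  set B := ∫ ω, auxMax M k ω ^ p ∂P with hBdef
  have hB0 : 0 ≤ B := integral_nonneg fun ω => Real.rpow_nonneg (auxMax_nonneg M k ω) _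
  set S := ∫ ω, |M k ω| ^ p ∂P with hSdef
  have hS0 : 0 ≤ S := integral_nonneg fun ω => by positivity
  have hp1 : 0 < p - 1 := by linarith
  rcases hB0.eq_or_lt with h0 | hBpos
  · rw [← h0, Real.zero_rpow (by positivity)]; positivity
  have hfin := hI.trans hH
  have eBB : B = B ^ (1 / (p / (p - 1))) * B ^ p⁻¹ := by
    rw [← Real.rpow_add hBpos]
    have : 1 / (p / (p - 1)) + p⁻¹ = 1 := by field_simp; ring
    rw [this, Real.rpow_one]
  have hBq : 0 < B ^ (1 / (p / (p - 1))) := by positivity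
  rw [one_div p] at hfin
  have h5 : B ^ (1 / (p / (p - 1))) * ((p - 1) / p * B ^ p⁻¹) ≤ B ^ (1 / (p / (p - 1))) * S ^ p⁻¹ := by
    calc _ = (p - 1) / p * (B ^ (1 / (p / (p - 1))) * B ^ p⁻¹) := by ring
      _ = (p - 1) / p * B := by rw [← eBB]
      _ ≤ _ := hfin
  have h6 := le_of_mul_le_mul_left h5 hBq
  calc B ^ p⁻¹ = p / (p - 1) * ((p - 1) / p * B ^ p⁻¹) := by field_simp
    _ ≤ _ := by gcongr

end doob

section assembly

lemma aux_meas_mat {Ω : Type*} {mΩ : MeasurableSpace Ω} {d m : ℕ} (A : Ω → Matrix (Fin d) (Fin m) ℝ)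
    (v : Ω → EuclideanSpace ℝ (Fin m)) (hA : ∀ i j, Measurable (fun ω => A ω i j))
    (hv : Measurable v) : Measurable (fun ω => matMulVec (A ω) (v ω)) := by
  unfold matMulVec
  refine (EuclideanSpace.equiv (Fin d) ℝ).symm.continuous.measurable.comp ?_
  refine measurable_pi_lambda _ fun i => ?_
  simp only [Matrix.mulVec, dotProduct]
  refine Finset.measurable_sum _ fun j _ => ?_
  have h2 : Measurable fun ω => (EuclideanSpace.equiv (Fin m) ℝ) (v ω) j := by
    simp only [PiLp.continuousLinearEquiv_apply]
    fun_prop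
  exact (hA i j).mul h2

lemma aux_meas_mart {Ω : Type*} {G mΩ : MeasurableSpace Ω} (hG : G ≤ mΩ) {m : ℕ} (M : Ω → ℝ)
    (g D : Ω → EuclideanSpace ℝ (Fin m)) (hM : Measurable[G] M) (hg : Measurable[G] g)
    (hD : Measurable D) : Measurable (fun ω => M ω + ⟪g ω, D ω⟫) := by
  have h1 : Measurable M := hM.mono hG le_rfl
  have h2 : Measurable g := hg.mono hG le_rfl
  fun_prop

lemma aux_exp_bound (x : ℝ) (h0 : 0 ≤ x) (h1 : x ≤ 1 / 2) : 1 ≤ Real.exp (2 * x) * (1 - x) := by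
  have h := Real.add_one_le_exp (2 * x)
  nlinarith

lemma aux_path_step {V : Type*} [NormedAddCommGroup V] [InnerProductSpace ℝ V] (x y b s : V)
    (h c : ℝ) (hh : 0 ≤ h) (hc : 0 ≤ c) (hch : 4 * c * h ≤ 1) (hx : x = y + h • b + s)
    (hb : ⟪x, b⟫ ≤ c * (1 + ‖x‖ ^ 2)) :
    1 + ‖x‖ ^ 2 ≤ Real.exp (4 * c * h) * (1 + ‖y‖ ^ 2 + 2 * ⟪y, s⟫ + ‖s‖ ^ 2) := by
  have e : x - h • b = y + s := by rw [hx]; abel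
  have e2 : ‖x - h • b‖ ^ 2 = ‖y + s‖ ^ 2 := by rw [e]
  rw [norm_sub_sq_real, norm_add_sq_real, real_inner_smul_right] at e2
  have h1 : (1 + ‖x‖ ^ 2) * (1 - 2 * c * h) ≤ 1 + ‖y‖ ^ 2 + 2 * ⟪y, s⟫ + ‖s‖ ^ 2 := by
    have := mul_le_mul_of_nonneg_left hb hh
    nlinarith [sq_nonneg ‖h • b‖]
  have h2 := aux_exp_bound (2 * c * h) (by positivity) (by linarith)
  rw [show 2 * (2 * c * h) = 4 * c * h by ring] at h2
  calc 1 + ‖x‖ ^ 2 ≤ (1 + ‖x‖ ^ 2) * (Real.exp (4 * c * h) * (1 - 2 * c * h)) :=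
        le_mul_of_one_le_right (by positivity) h2
    _ = Real.exp (4 * c * h) * ((1 + ‖x‖ ^ 2) * (1 - 2 * c * h)) := by ring
    _ ≤ _ := by gcongr

/-- Discrete Gronwall along a path. -/
lemma aux_path (X t u s : ℕ → ℝ) (c : ℝ) (k : ℕ) (ht0 : t 0 = 0)
    (hX : ∀ i < k, X (i + 1) ≤ Real.exp (4 * c * (t (i + 1) - t i)) * (X i + u i + s i)) :
    ∀ j ≤ k, Real.exp (-(4 * c * t j)) * X j ≤ X 0
      + ∑ i ∈ Finset.range j, Real.exp (-(4 * c * t i)) * u i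
      + ∑ i ∈ Finset.range j, Real.exp (-(4 * c * t i)) * s i := by
  intro j
  induction j with
  | zero => intro _; simp [ht0]
  | succ j ih =>
    intro hj
    have ih := ih (by omega)
    rw [Finset.sum_range_succ, Finset.sum_range_succ]
    have h := mul_le_mul_of_nonneg_left (hX j (by omega)) (Real.exp_pos (-(4 * c * t (j + 1)))).le
    rw [← mul_assoc, ← Real.exp_add,
      show -(4 * c * t (j + 1)) + 4 * c * (t (j + 1) - t j) = -(4 * c * t j) by ring] at h
    linarith

lemma aux_le_rpow_half (x z : ℝ≥0∞) (h : x ^ 2 ≤ z) : x ≤ z ^ ((1:ℝ) / 2) := by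
  have : x = (x ^ 2) ^ ((1:ℝ) / 2) := by
    rw [← ENNReal.rpow_two, ← ENNReal.rpow_mul]; norm_num
  rw [this]
  exact ENNReal.rpow_le_rpow h (by norm_num)

lemma aux_ofReal1 (a b c e : ℝ) (q : ℝ≥0∞) (ha : 0 ≤ a) (hb : 0 ≤ b) (hc : 0 ≤ c) (he : 0 ≤ e) :
    ENNReal.ofReal a ^ 2 * (ENNReal.ofReal b ^ 2 * (ENNReal.ofReal c * (ENNReal.ofReal e * q) ^ 2))
      = ENNReal.ofReal (a ^ 2 * (b ^ 2 * (c * e ^ 2))) * q ^ 2 := by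
  rw [ENNReal.ofReal_mul (by positivity), ENNReal.ofReal_mul (by positivity), ENNReal.ofReal_mul hc,
    ENNReal.ofReal_pow ha, ENNReal.ofReal_pow hb, ENNReal.ofReal_pow he]
  ring

lemma aux_ofReal2 (a b c : ℝ) (q : ℝ≥0∞) (ha : 0 ≤ a) (hb : 0 ≤ b) :
    ENNReal.ofReal a * (ENNReal.ofReal b * (ENNReal.ofReal c * q)) = ENNReal.ofReal (a * (b * c)) * q := by
  rw [ENNReal.ofReal_mul ha, ENNReal.ofReal_mul hb]
  ring

end assembly

theorem uniform_moment_bound_for_explicit_diffusion_implicit_drift_Euler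
    {Ω : Type*} [MeasurableSpace Ω] (P : Measure Ω) [IsProbabilityMeasure P]
    (d m : ℕ) (hd : 0 < d) (hm : 0 < m)
    (n : ℕ) (T c : ℝ) (hT : 0 ≤ T) (hc : 0 ≤ c)
    (t : ℕ → ℝ) (ht0 : t 0 = 0) (htn : t n = T) (htmono : ∀ i < n, t i < t (i + 1))
    (htmem : ∀ i ≤ n, t i ∈ Set.Icc (0:ℝ) T)
    (hmesh : 4 * c * gridMesh n t ≤ 1)
    (O : Set (EuclideanSpace ℝ (Fin d))) (hO : MeasurableSet O)
    (b : EuclideanSpace ℝ (Fin d) → EuclideanSpace ℝ (Fin d)) (hbmeas : Measurable b)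
    (σ : EuclideanSpace ℝ (Fin d) → Matrix (Fin d) (Fin m) ℝ)
    (hσmeas : ∀ i j, Measurable (fun x => σ x i j))
    (hcoerc : ∀ x ∈ O, ⟪x, b x⟫ ≤ c * (1 + ‖x‖ ^ 2))
    (F : ℝ → MeasurableSpace Ω)
    (hF_mono : ∀ s u : ℝ, s ≤ u → F s ≤ F u)
    (hF_le : ∀ u : ℝ, F u ≤ (inferInstance : MeasurableSpace Ω))
    (W : ℝ → Ω → EuclideanSpace ℝ (Fin m))
    (hW0 : ∀ ω, W 0 ω = 0)
    (hWadapt : ∀ u ∈ Set.Icc (0:ℝ) T, @Measurable Ω _ (F u) _ (W u))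
    (hWcont : ∀ ω, ContinuousOn (fun u => W u ω) (Set.Icc 0 T))
    (hWlaw : ∀ s u : ℝ, 0 ≤ s → s ≤ u → u ≤ T → ∀ l : EuclideanSpace ℝ (Fin m),
      Measure.map (fun ω => ⟪l, W u ω - W s ω⟫) P
        = gaussianReal 0 (Real.toNNReal ((u - s) * ‖l‖ ^ 2)))
    (hWindep : ∀ s u : ℝ, 0 ≤ s → s ≤ u → u ≤ T →
      Indep (MeasurableSpace.comap (fun ω => W u ω - W s ω) inferInstance) (F s) P)
    (Y : ℕ → Ω → EuclideanSpace ℝ (Fin d))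
    (hYmem : ∀ k ≤ n, ∀ ω, Y k ω ∈ O)
    (hYadapt : ∀ k ≤ n, @Measurable Ω _ (F (t k)) _ (Y k))
    (hYrec : ∀ k < n, ∀ᵐ ω ∂P,
      Y (k + 1) ω = Y k ω + (t (k + 1) - t k) • b (Y (k + 1) ω)
        + matMulVec (σ (Y k ω)) (W (t (k + 1)) ω - W (t k) ω)) :
    ∀ k ≤ n, ∀ p : ℝ, 2 ≤ p →
      eLpNorm (fun ω => ⨆ i : Fin (k + 1), (1 + ‖Y i.1 ω‖ ^ 2)) (ENNReal.ofReal p) P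
        ≤ ENNReal.ofReal (Real.exp (4 * c * t k)) *
              (1 + (eLpNorm (Y 0) (ENNReal.ofReal (2 * p)) P) ^ 2)
          + (ENNReal.ofReal (2 * p ^ 3 / (p - 1)) *
              ∑ i ∈ Finset.range k,
                ENNReal.ofReal (Real.exp (8 * c * (t k - t i))) *
                  (eLpNorm (fun ω => matMulVec (σ (Y i ω)).transpose (Y i ω))
                      (ENNReal.ofReal p) P) ^ 2 *
                  ENNReal.ofReal (t (i + 1) - t i)) ^ ((1:ℝ) / 2)
          + ENNReal.ofReal (p * (2 * p - 1)) *
              ∑ i ∈ Finset.range k,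
                ENNReal.ofReal (Real.exp (4 * c * (t k - t i))) *
                  (eLpNorm (fun ω => σ (Y i ω)) (ENNReal.ofReal (2 * p)) P) ^ 2 *
                  ENNReal.ofReal (t (i + 1) - t i) := by
  intro k hk p hp
  have hp0 : 0 < p := by linarith
  have hp1 : 0 < p - 1 := by linarith
  -- grid facts
  have hstep : ∀ i < n, 0 < t (i + 1) - t i := fun i hi => sub_pos.2 (htmono i hi)
  have hmesh' : ∀ i < n, 4 * c * (t (i + 1) - t i) ≤ 1 := by
    intro i hi
    have h1 : t (i + 1) - t i ≤ gridMesh n t :=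
      le_ciSup (f := fun i : Fin n => t (i.1 + 1) - t i.1) (Set.finite_range _).bddAbove ⟨i, hi⟩
    refine le_trans (mul_le_mul_of_nonneg_left h1 (by positivity)) hmesh
  have htle : ∀ j ≤ k, t j ≤ t k := by
    intro j hj
    induction k with
    | zero => obtain rfl : j = 0 := by omega
              exact le_rfl
    | succ k ih =>
      rcases hj.eq_or_lt with rfl | h
      · exact le_rfl
      · exact (ih (by omega) (by omega)).trans (htmono k (by omega)).le
  -- abbreviations
  set D : ℕ → Ω → EuclideanSpace ℝ (Fin m) := fun i ω => W (t (i + 1)) ω - W (t i) ω with hDdef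
  have hWm : ∀ i ≤ n, Measurable[F (t i)] (W (t i)) := fun i hi => hWadapt _ (htmem i hi)
  have hDm : ∀ i < n, Measurable[F (t (i + 1))] (D i) := fun i hi =>
    (hWm (i + 1) hi).sub ((hWm i hi.le).mono (hF_mono _ _ (htmono i hi).le) le_rfl)
  have hDm' : ∀ i < n, Measurable (D i) := fun i hi => (hDm i hi).mono (hF_le _) le_rfl
  have hDind : ∀ i < n, Indep (MeasurableSpace.comap (D i) inferInstance) (F (t i)) P := fun i hi =>
    hWindep _ _ (htmem i hi.le).1 (htmono i hi).le (htmem (i + 1) hi).2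
  have hDlaw : ∀ i < n, ∀ l : EuclideanSpace ℝ (Fin m), Measure.map (fun ω => ⟪l, D i ω⟫) P
      = gaussianReal 0 (Real.toNNReal ((t (i + 1) - t i) * ‖l‖ ^ 2)) := fun i hi l =>
    hWlaw _ _ (htmem i hi.le).1 (htmono i hi).le (htmem (i + 1) hi).2 l
  have hσY : ∀ i ≤ n, ∀ a b, Measurable[F (t i)] (fun ω => σ (Y i ω) a b) := fun i hi a b =>
    (hσmeas a b).comp (hYadapt i hi)
  set Z : ℕ → Ω → EuclideanSpace ℝ (Fin m) :=
    fun i ω => matMulVec (σ (Y i ω)).transpose (Y i ω) with hZdef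
  have hZm : ∀ i ≤ n, Measurable[F (t i)] (Z i) := fun i hi =>
    aux_meas_mat (mΩ := F (t i)) _ _ (fun a b => hσY i hi b a) (hYadapt i hi)
  set g : ℕ → Ω → EuclideanSpace ℝ (Fin m) :=
    fun i => (2 * Real.exp (-(4 * c * t i))) • Z i with hgdef
  have hgm : ∀ i ≤ n, Measurable[F (t i)] (g i) := fun i hi => (hZm i hi).const_smul _
  set s : ℕ → Ω → EuclideanSpace ℝ (Fin d) := fun i ω => matMulVec (σ (Y i ω)) (D i ω) with hsdef
  have hsm : ∀ i < n, Measurable (s i) := fun i hi =>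
    aux_meas_mat _ _ (fun a b => (hσY i hi.le a b).mono (hF_le _) le_rfl) (hDm' i hi)
  set ξ : ℕ → Ω → ℝ := fun i ω => ⟪g i ω, D i ω⟫ with hξdef
  set M : ℕ → Ω → ℝ := fun j ω => ∑ i ∈ Finset.range j, ξ i ω with hMdef
  have hM0 : ∀ ω, M 0 ω = 0 := fun ω => by simp [hMdef]
  have hMrec : ∀ i ω, M (i + 1) ω = M i ω + ξ i ω := fun i ω => by
    simp [hMdef, Finset.sum_range_succ]
  have hMm : ∀ j ≤ n, Measurable[F (t j)] (M j) := by
    intro j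
    induction j with
    | zero => intro _; rw [show M 0 = fun _ => 0 from funext hM0]; exact measurable_const
    | succ j ih =>
      intro hj
      rw [show M (j + 1) = fun ω => M j ω + ⟪g j ω, D j ω⟫ from funext (hMrec j)]
      exact aux_meas_mart (mΩ := F (t (j + 1))) (hF_mono _ _ (htmono j hj).le) _ _ _
        (ih (by omega)) (hgm j (by omega)) (hDm j hj)
  have hMm' : ∀ j ≤ n, Measurable (M j) := fun j hj => (hMm j hj).mono (hF_le _) le_rfl
  have hY0m : Measurable (Y 0) := (hYadapt 0 (by omega)).mono (hF_le _) le_rfl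
  have hmaxm : ∀ j ≤ n, Measurable (auxMax M j) := by
    intro j
    induction j with
    | zero => intro h; exact (hMm' 0 h).abs
    | succ j ih => intro h; exact (ih (by omega)).max (hMm' (j + 1) h).abs
  -- the infinite case
  by_cases hfin : ∃ i < k, eLpNorm (Z i) (ENNReal.ofReal p) P = ⊤
  · obtain ⟨i, hi, hinf⟩ := hfin
    have h1 : ∑ i ∈ Finset.range k, ENNReal.ofReal (Real.exp (8 * c * (t k - t i))) *
        (eLpNorm (Z i) (ENNReal.ofReal p) P) ^ 2 * ENNReal.ofReal (t (i + 1) - t i) = ⊤ := by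
      refine ENNReal.sum_eq_top.2 ⟨i, Finset.mem_range.2 hi, ?_⟩
      rw [hinf, ENNReal.top_pow two_ne_zero, ENNReal.mul_top (by simpa using Real.exp_pos _),
        ENNReal.top_mul (by simpa using htmono i (by omega))]
    have h2 : 0 < 2 * p ^ 3 / (p - 1) := by positivity
    rw [h1, ENNReal.mul_top (by simpa using h2), ENNReal.top_rpow_of_pos (by norm_num)]
    simp
  push Not at hfin
  -- quadratic variation bound
  have hgn : ∀ i, eLpNorm (g i) (ENNReal.ofReal p) P
      = ENNReal.ofReal (2 * Real.exp (-(4 * c * t i))) * eLpNorm (Z i) (ENNReal.ofReal p) P := fun i => by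
    rw [hgdef]
    simp only
    rw [eLpNorm_const_smul, Real.enorm_eq_ofReal (by positivity)]
  have hstepM : ∀ i < n, ∀ (M' : Ω → ℝ), Measurable[F (t i)] M' →
      (eLpNorm (fun ω => M' ω + ξ i ω) (ENNReal.ofReal p) P) ^ 2
      ≤ (eLpNorm M' (ENNReal.ofReal p) P) ^ 2
        + ENNReal.ofReal ((p - 1) * (t (i + 1) - t i)) * (eLpNorm (g i) (ENNReal.ofReal p) P) ^ 2 :=
    fun i hi M' hM' => aux_step (hF_le (t i)) (D i) (hDm' i hi) (hDind i hi) _ (hstep i hi).le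
      (hDlaw i hi) p hp M' hM' (g i) (hgm i hi.le)
  have hQV : ∀ j ≤ n, (eLpNorm (M j) (ENNReal.ofReal p) P) ^ 2 ≤ ∑ i ∈ Finset.range j,
      ENNReal.ofReal ((p - 1) * (t (i + 1) - t i)) * (eLpNorm (g i) (ENNReal.ofReal p) P) ^ 2 := by
    intro j
    induction j with
    | zero => intro _; rw [show M 0 = fun _ => 0 from funext hM0]; simp
    | succ j ih =>
      intro hj
      rw [Finset.sum_range_succ, show M (j + 1) = fun ω => M j ω + ξ j ω from funext (hMrec j)]
      exact (hstepM j hj (M j) (hMm j (by omega))).trans (add_le_add (ih (by omega)) le_rfl)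
  have hξL : ∀ i < k, MemLp (ξ i) (ENNReal.ofReal p) P := by
    intro i hi
    have hin : i < n := by omega
    refine ⟨?_, ?_⟩
    · have h1 : Measurable (g i) := (hgm i hin.le).mono (hF_le _) le_rfl
      have h2 := hDm' i hin
      exact (by fun_prop : Measurable (fun ω => ⟪g i ω, D i ω⟫)).aestronglyMeasurable
    · have h := hstepM i hin (fun _ => 0) measurable_const
      simp only [zero_add, eLpNorm_zero', ne_eq, OfNat.ofNat_ne_zero, not_false_eq_true, zero_pow] at h
      have h3 : (eLpNorm (ξ i) (ENNReal.ofReal p) P) ^ 2 < ⊤ := by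
        refine lt_of_le_of_lt h ?_
        rw [hgn]
        exact ENNReal.mul_lt_top ENNReal.ofReal_lt_top
          (ENNReal.pow_lt_top (ENNReal.mul_lt_top ENNReal.ofReal_lt_top (hfin i hi).lt_top))
      exact (ENNReal.pow_lt_top_iff.1 h3).resolve_right two_ne_zero
  have hdoob := aux_doob (P := P) M ξ k p hp hM0 (fun i _ => hMrec i) (fun i => F (t i))
    (fun i _ => hF_le _) (fun i hi => hF_mono _ _ (htmono i (by omega)).le)
    (fun i hi => hMm i (by omega)) hξL
    (fun i hi H hH hInt => aux_mean_zero (hF_le (t i)) (D i) (hDm' i (by omega)) (hDind i (by omega))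
      _ (hDlaw i (by omega)) H hH (g i) (hgm i (by omega)) hInt)
  -- pathwise bound
  set R : Ω → ℝ := fun ω => ∑ i ∈ Finset.range k, Real.exp (-(4 * c * t i)) * ‖s i ω‖ ^ 2 with hRdef
  have hpath : ∀ᵐ ω ∂P, ∀ j ≤ k, 1 + ‖Y j ω‖ ^ 2
      ≤ Real.exp (4 * c * t k) * ((1 + ‖Y 0 ω‖ ^ 2) + auxMax M k ω + R ω) := by
    have hall : ∀ᵐ ω ∂P, ∀ i, i < n → Y (i + 1) ω = Y i ω + (t (i + 1) - t i) • b (Y (i + 1) ω)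
        + matMulVec (σ (Y i ω)) (W (t (i + 1)) ω - W (t i) ω) := by
      rw [ae_all_iff]
      intro i
      by_cases hi : i < n
      · filter_upwards [hYrec i hi] with ω hω _ using hω
      · exact Eventually.of_forall fun ω h => absurd h hi
    filter_upwards [hall] with ω hω j hj
    have h1 := aux_path (fun i => 1 + ‖Y i ω‖ ^ 2) t (fun i => 2 * ⟪Y i ω, s i ω⟫)
      (fun i => ‖s i ω‖ ^ 2) c k ht0 (fun i hi =>
        aux_path_step _ _ _ _ _ c (hstep i (by omega)).le hc (hmesh' i (by omega)) (hω i (by omega))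
          (hcoerc _ (hYmem (i + 1) (by omega) ω))) j hj
    have h2 : ∑ i ∈ Finset.range j, Real.exp (-(4 * c * t i)) * (2 * ⟪Y i ω, s i ω⟫) = M j ω := by
      refine Finset.sum_congr rfl fun i _ => ?_
      simp only [hξdef, hgdef, hsdef, hZdef, Pi.smul_apply, real_inner_smul_left, aux_inner_matMulVec]
      ring
    have h3 : M j ω ≤ auxMax M k ω := (le_abs_self _).trans (auxMax_ge M k j hj ω)
    have h4 : ∑ i ∈ Finset.range j, Real.exp (-(4 * c * t i)) * ‖s i ω‖ ^ 2 ≤ R ω :=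
      Finset.sum_le_sum_of_subset_of_nonneg (Finset.range_mono hj) fun i _ _ => by positivity
    rw [h2] at h1
    have h5 : Real.exp (-(4 * c * t j)) * (1 + ‖Y j ω‖ ^ 2) ≤ (1 + ‖Y 0 ω‖ ^ 2) + auxMax M k ω + R ω := by
      linarith
    have h6 : Real.exp (4 * c * t j) ≤ Real.exp (4 * c * t k) :=
      Real.exp_le_exp.2 (mul_le_mul_of_nonneg_left (htle j hj) (by positivity))
    calc 1 + ‖Y j ω‖ ^ 2 = Real.exp (4 * c * t j) * (Real.exp (-(4 * c * t j)) * (1 + ‖Y j ω‖ ^ 2)) := by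
          rw [← mul_assoc, ← Real.exp_add, add_neg_cancel, Real.exp_zero, one_mul]
      _ ≤ Real.exp (4 * c * t k) * (Real.exp (-(4 * c * t j)) * (1 + ‖Y j ω‖ ^ 2)) := by gcongr
      _ ≤ _ := by gcongr
  have hp1' : (1 : ℝ≥0∞) ≤ ENNReal.ofReal p := by
    rw [← ENNReal.ofReal_one]; exact ENNReal.ofReal_le_ofReal (by linarith)
  have hRm : Measurable R := Finset.measurable_sum _ fun i hi => by
    have := hsm i (by have := Finset.mem_range.1 hi; omega)
    fun_prop
  have hmk := hmaxm k hk
  -- bound of the sup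
  have hsup : eLpNorm (fun ω => ⨆ i : Fin (k + 1), (1 + ‖Y i.1 ω‖ ^ 2)) (ENNReal.ofReal p) P
      ≤ ENNReal.ofReal (Real.exp (4 * c * t k)) * (eLpNorm (fun ω => 1 + ‖Y 0 ω‖ ^ 2) (ENNReal.ofReal p) P
        + eLpNorm (auxMax M k) (ENNReal.ofReal p) P + eLpNorm R (ENNReal.ofReal p) P) := by
    have h1 : eLpNorm (fun ω => ⨆ i : Fin (k + 1), (1 + ‖Y i.1 ω‖ ^ 2)) (ENNReal.ofReal p) P
        ≤ eLpNorm (Real.exp (4 * c * t k) • (((fun ω => 1 + ‖Y 0 ω‖ ^ 2) + auxMax M k) + R))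
          (ENNReal.ofReal p) P := by
      refine eLpNorm_mono_ae ?_
      filter_upwards [hpath] with ω hω
      rw [Real.norm_of_nonneg (Real.iSup_nonneg fun i => by positivity)]
      refine le_trans ?_ (le_abs_self _)
      exact ciSup_le fun i => hω i.1 (by omega)
    refine h1.trans ?_
    rw [eLpNorm_const_smul, Real.enorm_eq_ofReal (Real.exp_pos _).le]
    gcongr
    refine (eLpNorm_add_le (by fun_prop) (by fun_prop) hp1').trans ?_
    gcongr
    exact eLpNorm_add_le (by fun_prop) (by fun_prop) hp1'
  have hA : eLpNorm (fun ω => 1 + ‖Y 0 ω‖ ^ 2) (ENNReal.ofReal p) P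
      ≤ 1 + (eLpNorm (Y 0) (ENNReal.ofReal (2 * p)) P) ^ 2 := by
    have h1 : eLpNorm ((fun _ => (1:ℝ)) + fun ω => ‖Y 0 ω‖ ^ 2) (ENNReal.ofReal p) P
      ≤ _ := eLpNorm_add_le (by fun_prop) (by fun_prop) hp1'
    refine h1.trans ?_
    rw [aux_eLpNorm_sq _ p hp0, eLpNorm_const _ (by simpa using hp0) (NeZero.ne P)]
    simp
  have hB : ENNReal.ofReal (Real.exp (4 * c * t k)) * eLpNorm (auxMax M k) (ENNReal.ofReal p) P
      ≤ (ENNReal.ofReal (2 * p ^ 3 / (p - 1)) *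
              ∑ i ∈ Finset.range k,
                ENNReal.ofReal (Real.exp (8 * c * (t k - t i))) *
                  (eLpNorm (Z i) (ENNReal.ofReal p) P) ^ 2 *
                  ENNReal.ofReal (t (i + 1) - t i)) ^ ((1:ℝ) / 2) := by
    refine aux_le_rpow_half _ _ ?_
    have h1 : ENNReal.ofReal (Real.exp (4 * c * t k)) * eLpNorm (auxMax M k) (ENNReal.ofReal p) P
      ≤ ENNReal.ofReal (Real.exp (4 * c * t k)) * (ENNReal.ofReal (p / (p - 1)) *
        eLpNorm (M k) (ENNReal.ofReal p) P) := by gcongr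
    refine (pow_le_pow_left' h1 2).trans ?_
    rw [mul_pow, mul_pow]
    refine (mul_le_mul_right (mul_le_mul_right (hQV k hk) _) _).trans ?_
    rw [Finset.mul_sum, Finset.mul_sum, Finset.mul_sum]
    refine Finset.sum_le_sum fun i hi => ?_
    have hin : i < n := by have := Finset.mem_range.1 hi; omega
    have hh := (hstep i hin).le
    rw [hgn]
    set q := eLpNorm (Z i) (ENNReal.ofReal p) P
    have hle : Real.exp (4 * c * t k) ^ 2 * ((p / (p - 1)) ^ 2 * (((p - 1) * (t (i + 1) - t i))
        * (2 * Real.exp (-(4 * c * t i))) ^ 2)) ≤ 2 * p ^ 3 / (p - 1) *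
        (Real.exp (8 * c * (t k - t i)) * (t (i + 1) - t i)) := by
      have e1 : Real.exp (8 * c * (t k - t i)) = Real.exp (4 * c * t k) ^ 2 * Real.exp (-(4 * c * t i)) ^ 2 := by
        rw [← Real.exp_nat_mul, ← Real.exp_nat_mul, ← Real.exp_add]; congr 1; push_cast; ring
      rw [e1]
      have e2 : Real.exp (4 * c * t k) ^ 2 * ((p / (p - 1)) ^ 2 * (((p - 1) * (t (i + 1) - t i))
        * (2 * Real.exp (-(4 * c * t i))) ^ 2)) = (4 * p ^ 2 / (p - 1)) *
        (Real.exp (4 * c * t k) ^ 2 * Real.exp (-(4 * c * t i)) ^ 2 * (t (i + 1) - t i)) := by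
        field_simp
        ring
      rw [e2]
      refine mul_le_mul_of_nonneg_right ?_ (by positivity)
      refine div_le_div_of_nonneg_right ?_ hp1.le
      nlinarith [sq_nonneg p]
    calc _ = ENNReal.ofReal (Real.exp (4 * c * t k) ^ 2 * ((p / (p - 1)) ^ 2 * (((p - 1) * (t (i + 1) - t i))
        * (2 * Real.exp (-(4 * c * t i))) ^ 2))) * q ^ 2 :=
          aux_ofReal1 _ _ _ _ _ (by positivity) (by positivity) (by positivity) (by positivity)
      _ ≤ ENNReal.ofReal (2 * p ^ 3 / (p - 1) *
        (Real.exp (8 * c * (t k - t i)) * (t (i + 1) - t i))) * q ^ 2 := by gcongr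
      _ = _ := by
          rw [ENNReal.ofReal_mul (by positivity), ENNReal.ofReal_mul (by positivity)]
          ring
  have hC : ENNReal.ofReal (Real.exp (4 * c * t k)) * eLpNorm R (ENNReal.ofReal p) P
      ≤ ENNReal.ofReal (p * (2 * p - 1)) *
              ∑ i ∈ Finset.range k,
                ENNReal.ofReal (Real.exp (4 * c * (t k - t i))) *
                  (eLpNorm (fun ω => σ (Y i ω)) (ENNReal.ofReal (2 * p)) P) ^ 2 *
                  ENNReal.ofReal (t (i + 1) - t i) := by
    have eR : R = ∑ i ∈ Finset.range k, Real.exp (-(4 * c * t i)) • (fun ω => ‖s i ω‖ ^ 2) := by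
      funext ω; simp [hRdef, Finset.sum_apply]
    have h1 : eLpNorm R (ENNReal.ofReal p) P ≤ ∑ i ∈ Finset.range k,
        eLpNorm (Real.exp (-(4 * c * t i)) • (fun ω => ‖s i ω‖ ^ 2)) (ENNReal.ofReal p) P := by
      rw [eR]
      refine eLpNorm_sum_le (fun i hi => ?_) hp1'
      have := hsm i (by have := Finset.mem_range.1 hi; omega)
      exact (by fun_prop : Measurable (fun ω => ‖s i ω‖ ^ 2)).aestronglyMeasurable.const_smul _
    refine (mul_le_mul_right h1 _).trans ?_
    rw [Finset.mul_sum, Finset.mul_sum]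
    refine Finset.sum_le_sum fun i hi => ?_
    have hin : i < n := by have := Finset.mem_range.1 hi; omega
    have hh := (hstep i hin).le
    rw [eLpNorm_const_smul, Real.enorm_eq_ofReal (Real.exp_pos _).le, aux_eLpNorm_sq _ p hp0]
    have h2 := aux_mat (P := P) (hF_le (t i)) (D i) (hDm' i hin) (hDind i hin) _ hh (hDlaw i hin) p
      (by linarith) (fun ω => σ (Y i ω)) (hσY i hin.le)
    refine (mul_le_mul_right (mul_le_mul_right h2 _) _).trans ?_
    set q := eLpNorm (fun ω => σ (Y i ω)) (ENNReal.ofReal (2 * p)) P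
    have h2p : 0 ≤ 2 * p - 1 := by linarith
    have hle : Real.exp (4 * c * t k) * (Real.exp (-(4 * c * t i)) * ((2 * p - 1) * (t (i + 1) - t i)))
        ≤ p * (2 * p - 1) * (Real.exp (4 * c * (t k - t i)) * (t (i + 1) - t i)) := by
      have e1 : Real.exp (4 * c * (t k - t i)) = Real.exp (4 * c * t k) * Real.exp (-(4 * c * t i)) := by
        rw [← Real.exp_add]; congr 1; ring
      rw [e1]
      have e2 : Real.exp (4 * c * t k) * (Real.exp (-(4 * c * t i)) * ((2 * p - 1) * (t (i + 1) - t i)))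
        = 1 * ((2 * p - 1) * (Real.exp (4 * c * t k) * Real.exp (-(4 * c * t i)) * (t (i + 1) - t i))) := by ring
      rw [e2, mul_assoc p]
      exact mul_le_mul_of_nonneg_right (by linarith) (by positivity)
    calc _ = ENNReal.ofReal (Real.exp (4 * c * t k) * (Real.exp (-(4 * c * t i)) * ((2 * p - 1) * (t (i + 1) - t i)))) * q ^ 2 :=
          aux_ofReal2 _ _ _ _ (by positivity) (by positivity)
      _ ≤ ENNReal.ofReal (p * (2 * p - 1) * (Real.exp (4 * c * (t k - t i)) * (t (i + 1) - t i))) * q ^ 2 := by gcongr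
      _ = _ := by
          rw [ENNReal.ofReal_mul (by positivity), ENNReal.ofReal_mul (q := t (i + 1) - t i) (by positivity)]
          ring
  refine hsup.trans ?_
  rw [mul_add, mul_add]
  gcongr

end
end
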